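/- arXiv:1904.07022 — 2 statements merged into one kernel-verified Lean document; each statement's English description precedes it below -/
import Mathlib

section
/- (Theorem 1, consensus.) Let L ∈ ℝ^{n×n} be the Laplacian matrix of a strongly connected weighted digraph, and let ξ ∈ ℝⁿ be the strictly positive vector with Σ_i ξ_i = 1 and ξᵀL = 0. Let h > 0 and let g : ℝ → ℝ be continuous, monotone nondecreasing on ℝ, strictly increasing on [−h, h], satisfy g(x) = 0 iff x = 0, and be locally Lipschitz; extend g componentwise to a map g : ℝᵖ → ℝᵖ. For each i let α_i > 0, β_i > 0 and let e_i : [0, ∞) → ℝᵖ be a measurable function with ‖e_i(t)‖² ≤ α_i e^{−β_i t} for all t ≥ 0. Let x : [0, ∞) → (Fin n → ℝᵖ) be continuous and satisfy for all i and all t ≥ 0: x_i(t) = x_i(0) − ∫_0^t Σ_{j=1}^n L_{ij} ( g(x_j(s)) + e_j(s) ) ds. Let x̄ = Σ_{i=1}^n ξ_i x_i(0) ∈ ℝᵖ and suppose every component of x̄ satisfies |x̄_l| ≤ h, l = 1, …, p. Then consensus is achieved at the weighted average of the initial states: lim_{t→∞} x_i(t) = x̄ for every i ∈ {1, …, n}.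 -/
open Matrix Filter

/-!
Fix a coordinate and let `m` be the `ξ`-weighted mean of the states, which is conserved because
`ξᵀ L = 0`. The function `V = ∑ i, ξ i ∫_m^{x i} (g - g m)` satisfies the dissipation inequality
`V' ≤ -D / 4 + ∑ i j, ξ i A i j (e j)²`, where `D = ∑ i j, ξ i A i j (g (x j) - g (x i))²`. As the
errors are square integrable, `V` and `∫ D` are bounded. Sublevel sets of `V` are compact on the
hyperplane of mean `m`, so along a sequence of times with `D → 0` the states accumulate at a point
where `D = 0`: all outputs agree there, and as `g` separates the two sides of `m`, this point is the
consensus state. Thus `0` is a cluster value of `V`; as `V` can only increase by a tail of a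
convergent integral, `V → 0`, and this forces every cluster point of the states to be the consensus
state.
-/

open MeasureTheory Set Topology

section ClusterPoints

lemma eq_of_mapClusterPt_of_tendsto {α X : Type*} [TopologicalSpace X] [T2Space X] {l : Filter α}
    {u : α → X} {a b : X} (ha : MapClusterPt a l u) (hb : Tendsto u l (𝓝 b)) : a = b :=
  have : (𝓝 a ⊓ 𝓝 b).NeBot := NeBot.mono ha (inf_le_inf_left _ hb)
  eq_of_nhds_neBot this

lemma exists_mapClusterPt_of_mapClusterPt_comp {α X Y : Type*} [TopologicalSpace X]
    [TopologicalSpace Y] [T2Space Y] {l : Filter α} {u : α → X} {f : X → Y} {K : Set X} {c : Y}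
    (hK : IsCompact K) (hu : ∀ᶠ t in l, u t ∈ K) (hf : Continuous f)
    (hc : MapClusterPt c l (f ∘ u)) : ∃ z ∈ K, MapClusterPt z l u ∧ f z = c := by
  have : (l ⊓ comap (f ∘ u) (𝓝 c)).NeBot := by
    rw [neBot_inf_comap_iff_map, inf_comm]
    exact hc
  obtain ⟨z, hzK, hz⟩ := hK.exists_mapClusterPt (f := l ⊓ comap (f ∘ u) (𝓝 c)) (u := u)
    (tendsto_principal.mpr (hu.filter_mono inf_le_left))
  have hfu : Tendsto (f ∘ u) (l ⊓ comap (f ∘ u) (𝓝 c)) (𝓝 c) :=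
    tendsto_comap.mono_left inf_le_right
  exact ⟨z, hzK, hz.mono inf_le_left,
    eq_of_mapClusterPt_of_tendsto (hz.continuousAt_comp hf.continuousAt) hfu⟩

lemma mapClusterPt_zero_of_intervalIntegral_le {F : ℝ → ℝ} {C : ℝ}
    (hF : ContinuousOn F (Ici 0)) (hF0 : ∀ t, 0 ≤ F t)
    (hC : ∀ t, 0 ≤ t → ∫ s in 0..t, F s ≤ C) : MapClusterPt 0 atTop F := by
  rw [Metric.nhds_basis_ball.mapClusterPt_iff_frequently]
  intro ε hε hlarge
  obtain ⟨N, hN⟩ := eventually_atTop.mp (hlarge.and (eventually_ge_atTop 0))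
  have hN0 : 0 ≤ N := (hN N le_rfl).2
  have hle : ∀ t, N ≤ t → ε ≤ F t := fun t ht => by
    simpa [abs_of_nonneg (hF0 t)] using (hN t ht).1
  have hint : ∀ {a b : ℝ}, 0 ≤ a → 0 ≤ b → IntervalIntegrable F volume a b := fun ha hb =>
    (hF.mono ((convex_Ici 0).ordConnected.uIcc_subset ha hb)).intervalIntegrable
  have hgrow : ∀ t, N ≤ t → ε * (t - N) ≤ C := fun t ht =>
    calc ε * (t - N) = ∫ _ in N..t, ε := by
          rw [intervalIntegral.integral_const, smul_eq_mul, mul_comm]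
      _ ≤ ∫ s in N..t, F s := intervalIntegral.integral_mono_on ht intervalIntegrable_const
          (hint hN0 (hN0.trans ht)) fun s hs => hle s hs.1
      _ ≤ (∫ s in 0..N, F s) + ∫ s in N..t, F s :=
          le_add_of_nonneg_left (intervalIntegral.integral_nonneg hN0 fun s _ => hF0 s)
      _ = ∫ s in 0..t, F s := intervalIntegral.integral_add_adjacent_intervals
          (hint le_rfl hN0) (hint hN0 (hN0.trans ht))
      _ ≤ C := hC t (hN0.trans ht)
  have hC0 : 0 ≤ C := by simpa using hgrow N le_rfl
  have := hgrow (N + (C / ε + 1)) (le_add_of_nonneg_right (by positivity))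
  rw [add_sub_cancel_left, mul_add, mul_div_cancel₀ C hε.ne'] at this
  linarith

lemma tendsto_zero_of_sub_le_sub {V P : ℝ → ℝ} {p : ℝ} (hV0 : ∀ t, 0 ≤ V t)
    (hVP : ∀ s t, 0 ≤ s → s ≤ t → V t - V s ≤ P t - P s) (hP : Tendsto P atTop (𝓝 p))
    (hV : MapClusterPt 0 atTop V) : Tendsto V atTop (𝓝 0) := by
  refine Metric.tendsto_atTop.mpr fun ε hε => ?_
  have hPnear : ∀ᶠ t in atTop, dist (P t) p < ε / 4 := Metric.tendsto_nhds.mp hP _ (by positivity)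
  have hPtail : ∀ᶠ s in atTop, ∀ t, s ≤ t → dist (P t) p < ε / 4 :=
    eventually_forall_ge_atTop.mpr hPnear
  have hVsmall : ∃ᶠ s in atTop, V s < ε / 2 := hV.frequently (eventually_lt_nhds (by positivity))
  obtain ⟨s, hsV, hsP, hs0⟩ := (hVsmall.and_eventually (hPtail.and (eventually_ge_atTop 0))).exists
  refine ⟨s, fun t hst => ?_⟩
  have hPst : P t - P s < ε / 2 := by
    have ht := abs_lt.mp (hsP t hst)
    have hs := abs_lt.mp (hsP s le_rfl)
    linarith
  rw [Real.dist_0_eq_abs, abs_of_nonneg (hV0 t)]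
  linarith [hVP s t hs0 hst]

end ClusterPoints

section AbsolutelyContinuous

lemma absolutelyContinuousOnInterval_comp_of_lipschitzOnWith {X Y : Type*} [PseudoMetricSpace X]
    [PseudoMetricSpace Y] {G : X → Y} {w : ℝ → X} {a b : ℝ} {K : NNReal}
    (hG : LipschitzOnWith K G (w '' uIcc a b)) (hw : AbsolutelyContinuousOnInterval w a b) :
    AbsolutelyContinuousOnInterval (G ∘ w) a b := by
  have hKw := Tendsto.const_mul (K : ℝ) hw
  rw [mul_zero] at hKw
  refine squeeze_zero' (Eventually.of_forall fun E => Finset.sum_nonneg fun _ _ => dist_nonneg)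
    ?_ hKw
  filter_upwards [mem_inf_of_right (mem_principal_self _)] with E hE
  rw [Finset.mul_sum]
  exact Finset.sum_le_sum fun i hi =>
    hG.dist_le_mul _ (mem_image_of_mem w (hE.1 i hi).1) _ (mem_image_of_mem w (hE.1 i hi).2)

lemma integral_deriv_comp_mul_eq_sub {G v y : ℝ → ℝ} {a b : ℝ} (hG : ContDiff ℝ 1 G)
    (hv : IntervalIntegrable v volume a b)
    (hy : ∀ t ∈ uIcc a b, y t = y a + ∫ s in a..t, v s) :
    ∫ s in a..b, deriv G (y s) * v s = G (y b) - G (y a) := by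
  set w : ℝ → ℝ := fun t => y a + ∫ s in a..t, v s
  have hw : AbsolutelyContinuousOnInterval w a b :=
    (LipschitzWith.const (y a)).lipschitzOnWith.absolutelyContinuousOnInterval.add
      (hv.absolutelyContinuousOnInterval_intervalIntegral left_mem_uIcc)
  obtain ⟨K, hK⟩ := LocallyLipschitzOn.exists_lipschitzOnWith_of_compact
    (isCompact_uIcc.image_of_continuousOn hw.continuousOn) hG.locallyLipschitz.locallyLipschitzOn
  have hGw : AbsolutelyContinuousOnInterval (G ∘ w) a b :=
    absolutelyContinuousOnInterval_comp_of_lipschitzOnWith hK hw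
  have hsub : G (y b) - G (y a) = (G ∘ w) b - (G ∘ w) a := by
    simp [hy b right_mem_uIcc, w]
  rw [hsub, ← hGw.integral_deriv_eq_sub]
  refine intervalIntegral.integral_congr_ae ?_
  filter_upwards [hv.ae_hasDerivAt_integral] with s hs hs'
  have hs_mem : s ∈ uIcc a b := uIoc_subset_uIcc hs'
  have hw' : HasDerivAt w (v s) s := (hs hs_mem a left_mem_uIcc).const_add (y a)
  have hG' : HasDerivAt G (deriv G (w s)) (w s) :=
    (hG.differentiable one_ne_zero _).hasDerivAt
  rw [hy s hs_mem]
  exact (hG'.comp s hw').deriv.symm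

end AbsolutelyContinuous

section Laplacian

variable {ι : Type*} [Fintype ι]

/-- The Laplacian matrix of the weighted digraph with adjacency weights `A`: the weighted
in-degrees on the diagonal, minus `A`. -/
def weightedLaplacian [DecidableEq ι] (A : Matrix ι ι ℝ) : Matrix ι ι ℝ :=
  diagonal (fun i => ∑ k, A i k) - A

/-- The dissipation of the outputs `a` along the edges of the digraph. For a left null vector `ξ` of
the Laplacian `L` it is the quadratic form of `diag ξ * L + Lᵀ * diag ξ`. -/
def dissipation (A : Matrix ι ι ℝ) (ξ a : ι → ℝ) : ℝ :=
  ∑ i, ∑ j, ξ i * A i j * (a j - a i) ^ 2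

/-- The weighted sum of squares that bounds what output errors `e` can add to the Lyapunov function
per unit of time. -/
def errorCost (A : Matrix ι ι ℝ) (ξ e : ι → ℝ) : ℝ :=
  ∑ i, ξ i * (∑ k, A i k) * e i ^ 2

lemma continuous_dissipation (A : Matrix ι ι ℝ) (ξ : ι → ℝ) : Continuous (dissipation A ξ) := by
  unfold dissipation
  fun_prop

section Nonnegative

variable {A : Matrix ι ι ℝ} {ξ : ι → ℝ}

lemma dissipation_nonneg (hA : ∀ i j, 0 ≤ A i j) (hξ : ∀ i, 0 ≤ ξ i) (a : ι → ℝ) :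
    0 ≤ dissipation A ξ a :=
  Finset.sum_nonneg fun i _ => Finset.sum_nonneg fun j _ =>
    mul_nonneg (mul_nonneg (hξ i) (hA i j)) (sq_nonneg _)

lemma errorCost_nonneg (hA : ∀ i j, 0 ≤ A i j) (hξ : ∀ i, 0 ≤ ξ i) (e : ι → ℝ) :
    0 ≤ errorCost A ξ e :=
  Finset.sum_nonneg fun i _ =>
    mul_nonneg (mul_nonneg (hξ i) (Finset.sum_nonneg fun k _ => hA i k)) (sq_nonneg _)

lemma eq_of_dissipation_eq_zero (hA : ∀ i j, 0 ≤ A i j) (hξ : ∀ i, 0 < ξ i)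
    (hconn : ∀ i j, Relation.ReflTransGen (fun u v => 0 < A v u) i j) {a : ι → ℝ}
    (ha : dissipation A ξ a = 0) (i j : ι) : a i = a j := by
  have hterm_nonneg : ∀ v u, 0 ≤ ξ v * A v u * (a u - a v) ^ 2 := fun v u =>
    mul_nonneg (mul_nonneg (hξ v).le (hA v u)) (sq_nonneg _)
  have hterm : ∀ v u, ξ v * A v u * (a u - a v) ^ 2 = 0 := fun v u => by
    have hrow := (Finset.sum_eq_zero_iff_of_nonneg fun v _ =>
      Finset.sum_nonneg fun u _ => hterm_nonneg v u).mp ha v (Finset.mem_univ v)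
    exact (Finset.sum_eq_zero_iff_of_nonneg fun u _ => hterm_nonneg v u).mp hrow u
      (Finset.mem_univ u)
  have hedge : ∀ u v, 0 < A v u → a u = a v := fun u v huv => by
    have hsq := (mul_eq_zero.mp (hterm v u)).resolve_left (mul_pos (hξ v) huv).ne'
    exact sub_eq_zero.mp (pow_eq_zero_iff two_ne_zero |>.mp hsq)
  induction hconn i j with
  | refl => rfl
  | tail _ huv ih => exact ih.trans (hedge _ _ huv)

end Nonnegative

variable [DecidableEq ι] {A : Matrix ι ι ℝ} {ξ : ι → ℝ}

lemma weightedLaplacian_mulVec_apply (A : Matrix ι ι ℝ) (b : ι → ℝ) (i : ι) :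
    (weightedLaplacian A *ᵥ b) i = ∑ j, A i j * (b i - b j) := by
  rw [weightedLaplacian, sub_mulVec, Pi.sub_apply, mulVec_diagonal, mulVec, dotProduct,
    Finset.sum_mul, ← Finset.sum_sub_distrib]
  simp only [mul_sub]

/-- A left null vector of the Laplacian is a stationary flow: what leaves each vertex enters it. -/
lemma sum_weight_source_eq_sum_weight_target (hξA : ξ ᵥ* weightedLaplacian A = 0) (c : ι → ℝ) :
    ∑ i, ∑ j, ξ i * A i j * c j = ∑ i, ∑ j, ξ i * A i j * c i := by
  have h : ξ ⬝ᵥ (weightedLaplacian A *ᵥ c) = 0 := by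
    rw [dotProduct_mulVec, hξA, zero_dotProduct]
  simp only [dotProduct, weightedLaplacian_mulVec_apply, Finset.mul_sum, mul_sub,
    Finset.sum_sub_distrib, ← mul_assoc] at h
  exact (sub_eq_zero.mp h).symm

lemma sum_mul_weightedLaplacian_mulVec_eq (hξA : ξ ᵥ* weightedLaplacian A = 0) (a e : ι → ℝ)
    (c : ℝ) :
    ∑ i, ξ i * ((a i - c) * (weightedLaplacian A *ᵥ (a + e)) i) =
      ∑ i, ∑ j, ξ i * A i j * ((a j - a i) ^ 2 / 2 + (a j - a i) * e j) := by
  have hflow := sum_weight_source_eq_sum_weight_target hξA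
    fun i => a i * e i + a i ^ 2 / 2 - c * (a i + e i)
  rw [← sub_eq_zero] at hflow ⊢
  rw [← neg_eq_zero, ← hflow]
  simp only [weightedLaplacian_mulVec_apply, Pi.add_apply, Finset.mul_sum,
    ← Finset.sum_sub_distrib, ← Finset.sum_neg_distrib]
  refine Finset.sum_congr rfl fun i _ => Finset.sum_congr rfl fun j _ => ?_
  ring

lemma dissipation_sub_errorCost_le (hA : ∀ i j, 0 ≤ A i j) (hξ : ∀ i, 0 ≤ ξ i)
    (hξA : ξ ᵥ* weightedLaplacian A = 0) (a e : ι → ℝ) (c : ℝ) :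
    dissipation A ξ a / 4 - errorCost A ξ e ≤
      ∑ i, ξ i * ((a i - c) * (weightedLaplacian A *ᵥ (a + e)) i) := by
  have hcost : errorCost A ξ e = ∑ i, ∑ j, ξ i * A i j * e j ^ 2 := by
    rw [sum_weight_source_eq_sum_weight_target hξA fun i => e i ^ 2]
    simp only [errorCost, Finset.mul_sum, Finset.sum_mul]
  rw [sum_mul_weightedLaplacian_mulVec_eq hξA, hcost, dissipation, Finset.sum_div,
    ← Finset.sum_sub_distrib]
  refine Finset.sum_le_sum fun i _ => ?_
  rw [Finset.sum_div, ← Finset.sum_sub_distrib]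
  refine Finset.sum_le_sum fun j _ => ?_
  have hsq : 0 ≤ ξ i * A i j * ((a j - a i) / 2 + e j) ^ 2 :=
    mul_nonneg (mul_nonneg (hξ i) (hA i j)) (sq_nonneg _)
  linarith

end Laplacian

section Potential

/-- The Bregman divergence from `m` of a primitive of `g`; it is the storage function of a single
agent whose output is `g`. -/
noncomputable def bregmanPotential (g : ℝ → ℝ) (m u : ℝ) : ℝ :=
  ∫ s in m..u, (g s - g m)

lemma mul_sub_le_integral_of_monotone {k : ℝ → ℝ} (hk : Monotone k) (a b : ℝ) :
    k a * (b - a) ≤ ∫ s in a..b, k s := by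
  have hconst : ∀ c d : ℝ, ∫ _ in c..d, k a = k a * (d - c) := fun c d => by
    rw [intervalIntegral.integral_const, smul_eq_mul, mul_comm]
  rcases le_total a b with hab | hba
  · rw [← hconst]
    exact intervalIntegral.integral_mono_on hab intervalIntegrable_const hk.intervalIntegrable
      fun s hs => hk hs.1
  · rw [intervalIntegral.integral_symm, le_neg, ← mul_neg, neg_sub, ← hconst]
    exact intervalIntegral.integral_mono_on hba hk.intervalIntegrable intervalIntegrable_const
      fun s hs => hk hs.2

lemma bregmanPotential_self (g : ℝ → ℝ) (m : ℝ) : bregmanPotential g m m = 0 :=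
  intervalIntegral.integral_same

section Monotone

variable {g : ℝ → ℝ} (hg : Monotone g) (m : ℝ)

include hg

lemma bregmanPotential_nonneg (u : ℝ) : 0 ≤ bregmanPotential g m u := by
  have hk : Monotone fun s => g s - g m := fun _ _ h => sub_le_sub_right (hg h) _
  simpa [bregmanPotential] using mul_sub_le_integral_of_monotone hk m u

lemma mul_sub_le_bregmanPotential (b u : ℝ) : (g b - g m) * (u - b) ≤ bregmanPotential g m u := by
  have hk : Monotone fun s => g s - g m := fun _ _ h => sub_le_sub_right (hg h) _
  calc (g b - g m) * (u - b) ≤ ∫ s in b..u, (g s - g m) := mul_sub_le_integral_of_monotone hk b u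
    _ ≤ bregmanPotential g m b + ∫ s in b..u, (g s - g m) :=
      le_add_of_nonneg_left (bregmanPotential_nonneg hg m b)
    _ = bregmanPotential g m u := intervalIntegral.integral_add_adjacent_intervals
      hk.intervalIntegrable hk.intervalIntegrable

lemma mul_abs_add_le_two_mul_bregmanPotential (u : ℝ) :
    (g (m + 1) - g m) * (|u - m| + (u - m) - 2) ≤ 2 * bregmanPotential g m u := by
  rcases le_total m u with hu | hu
  · rw [abs_of_nonneg (sub_nonneg.mpr hu)]
    linarith [mul_sub_le_bregmanPotential hg m (m + 1) u]
  · rw [abs_of_nonpos (sub_nonpos.mpr hu)]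
    linarith [hg (show m ≤ m + 1 by linarith), bregmanPotential_nonneg hg m u]

lemma mul_abs_sub_le_two_mul_bregmanPotential (u : ℝ) :
    (g m - g (m - 1)) * (|u - m| - (u - m) - 2) ≤ 2 * bregmanPotential g m u := by
  rcases le_total m u with hu | hu
  · rw [abs_of_nonneg (sub_nonneg.mpr hu)]
    linarith [hg (show m - 1 ≤ m by linarith), bregmanPotential_nonneg hg m u]
  · rw [abs_of_nonpos (sub_nonpos.mpr hu)]
    linarith [mul_sub_le_bregmanPotential hg m (m - 1) u]

end Monotone

section Continuous

variable {g : ℝ → ℝ} (hg : Continuous g) (m : ℝ)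

include hg

lemma hasDerivAt_bregmanPotential (u : ℝ) : HasDerivAt (bregmanPotential g m) (g u - g m) u :=
  (hg.sub continuous_const).integral_hasStrictDerivAt m u |>.hasDerivAt

lemma deriv_bregmanPotential : deriv (bregmanPotential g m) = fun u => g u - g m :=
  funext fun u => (hasDerivAt_bregmanPotential hg m u).deriv

lemma contDiff_bregmanPotential : ContDiff ℝ 1 (bregmanPotential g m) := by
  rw [contDiff_one_iff_deriv, deriv_bregmanPotential hg]
  exact ⟨fun u => (hasDerivAt_bregmanPotential hg m u).differentiableAt, hg.sub continuous_const⟩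

lemma apply_eq_of_bregmanPotential_eq_zero (hmono : Monotone g) {u : ℝ}
    (hu : bregmanPotential g m u = 0) : g u = g m := by
  have hmin : IsLocalMin (bregmanPotential g m) u :=
    Eventually.of_forall fun v => hu.trans_le (bregmanPotential_nonneg hmono m v)
  exact sub_eq_zero.mp (hmin.hasDerivAt_eq_zero (hasDerivAt_bregmanPotential hg m u))

end Continuous

end Potential

section Lyapunov

variable {ι : Type*} [Fintype ι] {ξ : ι → ℝ} {g : ℝ → ℝ} {m : ℝ}

/-- The Lyapunov function of the closed loop with output function `g` and consensus value `m`. -/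
noncomputable def lyapunov (ξ : ι → ℝ) (g : ℝ → ℝ) (m : ℝ) (z : ι → ℝ) : ℝ :=
  ∑ i, ξ i * bregmanPotential g m (z i)

lemma continuous_lyapunov (hg : Continuous g) : Continuous (lyapunov ξ g m) := by
  have := (contDiff_bregmanPotential hg m).continuous
  unfold lyapunov
  fun_prop

lemma lyapunov_nonneg (hξ : ∀ i, 0 ≤ ξ i) (hg : Monotone g) (z : ι → ℝ) : 0 ≤ lyapunov ξ g m z :=
  Finset.sum_nonneg fun i _ => mul_nonneg (hξ i) (bregmanPotential_nonneg hg m (z i))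

lemma lyapunov_const (ξ : ι → ℝ) (g : ℝ → ℝ) (m : ℝ) : lyapunov ξ g m (fun _ => m) = 0 := by
  simp [lyapunov, bregmanPotential_self]

lemma apply_eq_of_lyapunov_eq_zero (hξ : ∀ i, 0 < ξ i) (hg : Continuous g) (hmono : Monotone g)
    {z : ι → ℝ} (hz : lyapunov ξ g m z = 0) (i : ι) : g (z i) = g m := by
  have hterm := (Finset.sum_eq_zero_iff_of_nonneg fun i _ =>
    mul_nonneg (hξ i).le (bregmanPotential_nonneg hmono m (z i))).mp hz i (Finset.mem_univ i)
  exact apply_eq_of_bregmanPotential_eq_zero hg m hmono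
    ((mul_eq_zero.mp hterm).resolve_left (hξ i).ne')

/-- Around the weighted mean, the positive and the negative parts of the deviations have the same
weight, so growth of the potential on one side of `m` suffices for coercivity. -/
lemma mul_sum_abs_sub_le_lyapunov (hξ : ∀ i, 0 ≤ ξ i) (hξ1 : ∑ i, ξ i = 1) (hg : Monotone g)
    {z : ι → ℝ} (hz : ∑ i, ξ i * z i = m) :
    (g (m + 1) - g (m - 1)) * (∑ i, ξ i * |z i - m| - 2) ≤ 4 * lyapunov ξ g m z := by
  have hdev : ∑ i, ξ i * (z i - m) = 0 := by
    simp only [mul_sub, Finset.sum_sub_distrib, ← Finset.sum_mul, hξ1, hz, one_mul, sub_self]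
  have hright : (g (m + 1) - g m) * (∑ i, ξ i * |z i - m| - 2) ≤ 2 * lyapunov ξ g m z :=
    calc (g (m + 1) - g m) * (∑ i, ξ i * |z i - m| - 2)
        = (g (m + 1) - g m) *
            (∑ i, ξ i * |z i - m| + ∑ i, ξ i * (z i - m) - (∑ i, ξ i) * 2) := by
          rw [hdev, hξ1, add_zero, one_mul]
      _ = ∑ i, ξ i * ((g (m + 1) - g m) * (|z i - m| + (z i - m) - 2)) := by
          rw [Finset.sum_mul, ← Finset.sum_add_distrib, ← Finset.sum_sub_distrib, Finset.mul_sum]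
          exact Finset.sum_congr rfl fun i _ => by ring
      _ ≤ ∑ i, ξ i * (2 * bregmanPotential g m (z i)) := Finset.sum_le_sum fun i _ =>
          mul_le_mul_of_nonneg_left (mul_abs_add_le_two_mul_bregmanPotential hg m (z i)) (hξ i)
      _ = 2 * lyapunov ξ g m z := by
          simp only [lyapunov, Finset.mul_sum, mul_left_comm]
  have hleft : (g m - g (m - 1)) * (∑ i, ξ i * |z i - m| - 2) ≤ 2 * lyapunov ξ g m z :=
    calc (g m - g (m - 1)) * (∑ i, ξ i * |z i - m| - 2)
        = (g m - g (m - 1)) *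
            (∑ i, ξ i * |z i - m| - ∑ i, ξ i * (z i - m) - (∑ i, ξ i) * 2) := by
          rw [hdev, hξ1, sub_zero, one_mul]
      _ = ∑ i, ξ i * ((g m - g (m - 1)) * (|z i - m| - (z i - m) - 2)) := by
          rw [Finset.sum_mul, ← Finset.sum_sub_distrib, ← Finset.sum_sub_distrib, Finset.mul_sum]
          exact Finset.sum_congr rfl fun i _ => by ring
      _ ≤ ∑ i, ξ i * (2 * bregmanPotential g m (z i)) := Finset.sum_le_sum fun i _ =>
          mul_le_mul_of_nonneg_left (mul_abs_sub_le_two_mul_bregmanPotential hg m (z i)) (hξ i)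
      _ = 2 * lyapunov ξ g m z := by
          simp only [lyapunov, Finset.mul_sum, mul_left_comm]
  linarith

lemma isCompact_lyapunov_sublevel (hξ : ∀ i, 0 < ξ i) (hξ1 : ∑ i, ξ i = 1) (hg : Continuous g)
    (hmono : Monotone g) (hgm : g (m - 1) < g (m + 1)) (C : ℝ) :
    IsCompact {z : ι → ℝ | ∑ i, ξ i * z i = m ∧ lyapunov ξ g m z ≤ C} := by
  set r : ℝ := 4 * C / (g (m + 1) - g (m - 1)) + 2
  refine (isCompact_univ_pi fun i => isCompact_closedBall m (r / ξ i)).of_isClosed_subset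
    ((isClosed_eq (by fun_prop) continuous_const).inter
      (isClosed_le (continuous_lyapunov hg) continuous_const)) ?_
  rintro z ⟨hz, hzC⟩ i -
  have hsum : ∑ i, ξ i * |z i - m| ≤ r := by
    have hcoer := mul_sum_abs_sub_le_lyapunov (fun i => (hξ i).le) hξ1 hmono hz
    rw [← sub_le_iff_le_add, le_div_iff₀ (sub_pos.mpr hgm), mul_comm]
    linarith
  have hi : ξ i * |z i - m| ≤ r :=
    (Finset.single_le_sum (f := fun i => ξ i * |z i - m|)
      (fun i _ => mul_nonneg (hξ i).le (abs_nonneg _)) (Finset.mem_univ i)).trans hsum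
  rwa [Metric.mem_closedBall, Real.dist_eq, le_div_iff₀' (hξ i)]

lemma eq_weightedMean_of_apply_eq (hξ : ∀ i, 0 < ξ i) (hξ1 : ∑ i, ξ i = 1)
    (hgm : ∀ a b, a < m → m < b → g a < g b) {z : ι → ℝ} (hz : ∑ i, ξ i * z i = m)
    (hgz : ∀ i j, g (z i) = g (z j)) : z = fun _ => m := by
  have hdev : ∑ i, ξ i * (z i - m) = 0 := by
    simp only [mul_sub, Finset.sum_sub_distrib, ← Finset.sum_mul, hξ1, hz, one_mul, sub_self]
  by_contra hne
  obtain ⟨k, hk⟩ := Function.ne_iff.mp hne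
  have hk' : ξ k * (z k - m) ≠ 0 := mul_ne_zero (hξ k).ne' (sub_ne_zero.mpr hk)
  obtain ⟨j, -, hj⟩ := Finset.exists_pos_of_sum_zero_of_exists_nonzero _ hdev
    ⟨k, Finset.mem_univ k, hk'⟩
  obtain ⟨i, -, hi⟩ := Finset.exists_pos_of_sum_zero_of_exists_nonzero
    (fun i => -(ξ i * (z i - m))) (by rw [Finset.sum_neg_distrib, hdev, neg_zero])
    ⟨k, Finset.mem_univ k, neg_ne_zero.mpr hk'⟩
  have hmj : m < z j := sub_pos.mp ((mul_pos_iff_of_pos_left (hξ j)).mp hj)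
  have him : z i < m :=
    sub_neg.mp (neg_of_mul_neg_right (neg_pos.mp hi) (hξ i).le)
  exact (hgm _ _ him hmj).ne (hgz i j)

end Lyapunov

section SquareIntegrable

lemma locallyIntegrableOn_of_memLp_two_restrict {X E : Type*} [TopologicalSpace X]
    [MeasurableSpace X] [OpensMeasurableSpace X] [NormedAddCommGroup E] {μ : Measure X}
    [IsLocallyFiniteMeasure μ] {S : Set X} {f : X → E} (hf : MemLp f 2 (μ.restrict S)) :
    LocallyIntegrableOn f S μ :=
  locallyIntegrableOn_of_locallyIntegrable_restrict (hf.locallyIntegrable one_le_two)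

lemma memLp_two_restrict_Ici_of_norm_sq_le_exp {E : Type*} [NormedAddCommGroup E] {f : ℝ → E}
    {α β : ℝ} (hβ : 0 < β) (hf : AEStronglyMeasurable f (volume.restrict (Ici 0)))
    (hle : ∀ t, 0 ≤ t → ‖f t‖ ^ 2 ≤ α * Real.exp (-β * t)) :
    MemLp f 2 (volume.restrict (Ici 0)) := by
  have hexp : IntegrableOn (fun t => α * Real.exp (-β * t)) (Ici 0) :=
    (integrableOn_Ici_iff_integrableOn_Ioi).mpr
      ((integrableOn_exp_mul_Ioi (neg_neg_of_pos hβ) 0).const_mul α)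
  rw [memLp_two_iff_integrable_sq_norm hf]
  refine hexp.mono' (hf.norm.pow 2) ((ae_restrict_mem measurableSet_Ici).mono fun t ht => ?_)
  rw [Real.norm_of_nonneg (sq_nonneg _)]
  exact hle t ht

lemma integrable_errorCost {ι X : Type*} [Fintype ι] [MeasurableSpace X] {μ : Measure X}
    (A : Matrix ι ι ℝ) (ξ : ι → ℝ) {e : ι → X → ℝ} (he : ∀ j, MemLp (e j) 2 μ) :
    Integrable (fun t => errorCost A ξ fun i => e i t) μ :=
  integrable_finsetSum _ fun i _ => (he i).integrable_sq.const_mul _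

end SquareIntegrable

/-- A continuous solution on `[0, ∞)` of the closed loop `x' = -L (g(x) + e)` in integral form: the
measurement errors `e` need not be continuous, so `x` need not be differentiable. -/
structure IsClosedLoopSolution {ι E : Type*} [Fintype ι] [NormedAddCommGroup E] [NormedSpace ℝ E]
    (L : Matrix ι ι ℝ) (g : E → E) (e : ι → ℝ → E) (x : ℝ → ι → E) : Prop where
  continuousOn : ∀ i, ContinuousOn (fun t => x t i) (Ici 0)
  eq_sub_integral : ∀ i t, 0 ≤ t → x t i = x 0 i - ∫ s in 0..t, ∑ j, L i j • (g (x s j) + e j s)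

namespace IsClosedLoopSolution

section NormedSpace

variable {ι E : Type*} [Fintype ι] [NormedAddCommGroup E] [NormedSpace ℝ E] {L : Matrix ι ι ℝ}
  {g : E → E} {e : ι → ℝ → E} {x : ℝ → ι → E}

lemma intervalIntegrable (hx : IsClosedLoopSolution L g e x) (hg : Continuous g)
    (he : ∀ j, LocallyIntegrableOn (e j) (Ici 0)) (i : ι) {a b : ℝ} (ha : 0 ≤ a) (hb : 0 ≤ b) :
    IntervalIntegrable (fun s => ∑ j, L i j • (g (x s j) + e j s)) volume a b := by
  have hab : uIcc a b ⊆ Ici 0 := (convex_Ici 0).ordConnected.uIcc_subset ha hb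
  have hgx : ∀ j, IntervalIntegrable (fun s => g (x s j)) volume a b := fun j =>
    (hg.comp_continuousOn ((hx.continuousOn j).mono hab)).intervalIntegrable
  have hej : ∀ j, IntervalIntegrable (e j) volume a b := fun j =>
    ((he j).integrableOn_compact_subset hab isCompact_uIcc).intervalIntegrable
  simpa only [Finset.sum_fn, Pi.smul_apply] using
    IntervalIntegrable.sum Finset.univ fun j _ => ((hgx j).add (hej j)).smul (L i j)

lemma eq_add_integral (hx : IsClosedLoopSolution L g e x) (hg : Continuous g)
    (he : ∀ j, LocallyIntegrableOn (e j) (Ici 0)) (i : ι) {s t : ℝ} (hs : 0 ≤ s) (ht : 0 ≤ t) :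
    x t i = x s i + ∫ r in s..t, -∑ j, L i j • (g (x r j) + e j r) := by
  rw [intervalIntegral.integral_neg, ← intervalIntegral.integral_add_adjacent_intervals
    (hx.intervalIntegrable hg he i hs le_rfl) (hx.intervalIntegrable hg he i le_rfl ht),
    intervalIntegral.integral_symm, hx.eq_sub_integral i s hs, hx.eq_sub_integral i t ht]
  abel

lemma map [CompleteSpace E] {F : Type*} [NormedAddCommGroup F] [NormedSpace ℝ F] [CompleteSpace F]
    (hx : IsClosedLoopSolution L g e x) (hg : Continuous g)
    (he : ∀ j, LocallyIntegrableOn (e j) (Ici 0)) (φ : E →L[ℝ] F) {k : F → F}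
    (hφ : ∀ v, φ (g v) = k (φ v)) :
    IsClosedLoopSolution L k (fun j t => φ (e j t)) (fun t i => φ (x t i)) where
  continuousOn i := φ.continuous.comp_continuousOn (hx.continuousOn i)
  eq_sub_integral i t ht := by
    rw [hx.eq_sub_integral i t ht, map_sub,
      ← φ.intervalIntegral_comp_comm (hx.intervalIntegrable hg he i le_rfl ht)]
    simp only [map_sum, map_smul, map_add, hφ]

lemma sum_smul_eq (hx : IsClosedLoopSolution L g e x) (hg : Continuous g)
    (he : ∀ j, LocallyIntegrableOn (e j) (Ici 0)) {ξ : ι → ℝ} (hξL : ξ ᵥ* L = 0) {t : ℝ}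
    (ht : 0 ≤ t) : ∑ i, ξ i • x t i = ∑ i, ξ i • x 0 i := by
  have hcancel : ∀ w : ι → E, ∑ i, ξ i • ∑ j, L i j • w j = 0 := fun w => by
    simp only [Finset.smul_sum, smul_smul]
    rw [Finset.sum_comm]
    refine Finset.sum_eq_zero fun j _ => ?_
    rw [← Finset.sum_smul, show ∑ i, ξ i * L i j = 0 from congrFun hξL j, zero_smul]
  have hflux : ∑ i, ξ i • ∫ s in 0..t, ∑ j, L i j • (g (x s j) + e j s) = 0 :=
    calc ∑ i, ξ i • ∫ s in 0..t, ∑ j, L i j • (g (x s j) + e j s)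
        = ∑ i, ∫ s in 0..t, ξ i • ∑ j, L i j • (g (x s j) + e j s) := by
          simp only [intervalIntegral.integral_smul]
      _ = ∫ s in 0..t, ∑ i, ξ i • ∑ j, L i j • (g (x s j) + e j s) :=
          (intervalIntegral.integral_finsetSum fun i _ =>
            (hx.intervalIntegrable hg he i le_rfl ht).smul (ξ i)).symm
      _ = 0 := by simp only [hcancel, intervalIntegral.integral_zero]
  calc ∑ i, ξ i • x t i
      = ∑ i, ξ i • (x 0 i - ∫ s in 0..t, ∑ j, L i j • (g (x s j) + e j s)) :=
        Finset.sum_congr rfl fun i _ => by rw [hx.eq_sub_integral i t ht]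
    _ = ∑ i, ξ i • x 0 i := by simp only [smul_sub, Finset.sum_sub_distrib, hflux, sub_zero]

end NormedSpace

section Scalar

variable {ι : Type*} [Fintype ι] {g : ℝ → ℝ} {e : ι → ℝ → ℝ} {x : ℝ → ι → ℝ}

section Rate

variable {L : Matrix ι ι ℝ} (hx : IsClosedLoopSolution L g e x) (hg : Continuous g)
  (he : ∀ j, LocallyIntegrableOn (e j) (Ici 0)) (c : ℝ) (i : ι) {s t : ℝ} (hs : 0 ≤ s) (ht : 0 ≤ t)

include hx hg he hs ht

lemma intervalIntegrable_sub_mul_mulVec : IntervalIntegrable (fun r => (g (x r i) - c) *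
    (L *ᵥ ((fun j => g (x r j)) + fun j => e j r)) i) volume s t :=
  (hx.intervalIntegrable hg he i hs ht).continuousOn_mul <|
    (hg.comp_continuousOn ((hx.continuousOn i).mono
      ((convex_Ici 0).ordConnected.uIcc_subset hs ht))).sub continuousOn_const

lemma bregmanPotential_sub_bregmanPotential (m : ℝ) :
    bregmanPotential g m (x t i) - bregmanPotential g m (x s i) = -∫ r in s..t, (g (x r i) - g m) *
      (L *ᵥ ((fun j => g (x r j)) + fun j => e j r)) i := by
  rw [← integral_deriv_comp_mul_eq_sub (contDiff_bregmanPotential hg m)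
    (hx.intervalIntegrable hg he i hs ht).neg fun r hr => hx.eq_add_integral hg he i hs
      ((convex_Ici 0).ordConnected.uIcc_subset hs ht hr), ← intervalIntegral.integral_neg]
  simp only [deriv_bregmanPotential hg, Pi.neg_apply, mul_neg, mulVec, dotProduct, Pi.add_apply,
    smul_eq_mul]

end Rate

lemma continuousOn_dissipation {L : Matrix ι ι ℝ} (hx : IsClosedLoopSolution L g e x)
    (hg : Continuous g) (A : Matrix ι ι ℝ) (ξ : ι → ℝ) :
    ContinuousOn (fun t => dissipation A ξ fun i => g (x t i)) (Ici 0) :=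
  (continuous_dissipation A ξ).comp_continuousOn <|
    continuousOn_pi.mpr fun i => hg.comp_continuousOn (hx.continuousOn i)

variable [DecidableEq ι] {A : Matrix ι ι ℝ} {ξ : ι → ℝ}
  (hx : IsClosedLoopSolution (weightedLaplacian A) g e x)

section Dissipation

variable (hA : ∀ i j, 0 ≤ A i j) (hξ : ∀ i, 0 ≤ ξ i) (hξA : ξ ᵥ* weightedLaplacian A = 0)
  (hg : Continuous g) (he : ∀ j, MemLp (e j) 2 (volume.restrict (Ici 0)))

include hx hA hξ hξA hg he

lemma lyapunov_sub_add_integral_dissipation_le (m : ℝ) {s t : ℝ} (hs : 0 ≤ s) (hst : s ≤ t) :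
    lyapunov ξ g m (x t) - lyapunov ξ g m (x s) +
        (∫ r in s..t, dissipation A ξ fun i => g (x r i)) / 4 ≤
      ∫ r in s..t, errorCost A ξ fun i => e i r := by
  have ht : 0 ≤ t := hs.trans hst
  have hloc := fun j => locallyIntegrableOn_of_memLp_two_restrict (he j)
  have hsupply := fun i => (hx.intervalIntegrable_sub_mul_mulVec hg hloc (g m) i hs ht).const_mul
    (ξ i)
  have hdecay : lyapunov ξ g m (x t) - lyapunov ξ g m (x s) =
      -∫ r in s..t, ∑ i, ξ i * ((g (x r i) - g m) *
        (weightedLaplacian A *ᵥ ((fun j => g (x r j)) + fun j => e j r)) i) := by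
    rw [intervalIntegral.integral_finsetSum fun i _ => hsupply i, lyapunov, lyapunov,
      ← Finset.sum_sub_distrib, ← Finset.sum_neg_distrib]
    refine Finset.sum_congr rfl fun i _ => ?_
    rw [intervalIntegral.integral_const_mul, ← mul_neg, ← mul_sub,
      hx.bregmanPotential_sub_bregmanPotential hg hloc i hs ht]
  have hD : IntervalIntegrable (fun r => dissipation A ξ fun i => g (x r i)) volume s t :=
    ((hx.continuousOn_dissipation hg A ξ).mono
      ((convex_Ici 0).ordConnected.uIcc_subset hs ht)).intervalIntegrable
  have hE : IntervalIntegrable (fun r => errorCost A ξ fun i => e i r) volume s t :=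
    (IntegrableOn.mono_set (integrable_errorCost A ξ he)
      ((convex_Ici 0).ordConnected.uIcc_subset hs ht)).intervalIntegrable
  have hsum := IntervalIntegrable.sum Finset.univ fun i _ => hsupply i
  simp only [Finset.sum_fn] at hsum
  have hle := intervalIntegral.integral_mono_on hst ((hD.div_const 4).sub hE) hsum fun r _ =>
    dissipation_sub_errorCost_le hA hξ hξA (fun i => g (x r i)) (fun i => e i r) (g m)
  rw [intervalIntegral.integral_sub (hD.div_const 4) hE, intervalIntegral.integral_div] at hle
  linarith

lemma lyapunov_sub_le (m : ℝ) {s t : ℝ} (hs : 0 ≤ s) (hst : s ≤ t) :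
    lyapunov ξ g m (x t) - lyapunov ξ g m (x s) ≤
      (∫ r in 0..t, errorCost A ξ fun i => e i r) - ∫ r in 0..s, errorCost A ξ fun i => e i r := by
  have hE : ∀ {b}, 0 ≤ b → IntervalIntegrable (fun r => errorCost A ξ fun i => e i r) volume 0 b :=
    fun hb => (IntegrableOn.mono_set (integrable_errorCost A ξ he)
      ((convex_Ici 0).ordConnected.uIcc_subset self_mem_Ici hb)).intervalIntegrable
  rw [intervalIntegral.integral_interval_sub_left (hE (hs.trans hst)) (hE hs)]
  have hdiss : 0 ≤ ∫ r in s..t, dissipation A ξ fun i => g (x r i) :=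
    intervalIntegral.integral_nonneg hst fun r _ => dissipation_nonneg hA hξ _
  linarith [hx.lyapunov_sub_add_integral_dissipation_le hA hξ hξA hg he m hs hst]

lemma exists_forall_lyapunov_add_integral_dissipation_le (m : ℝ) :
    ∃ C, ∀ t, 0 ≤ t →
      lyapunov ξ g m (x t) + (∫ r in 0..t, dissipation A ξ fun i => g (x r i)) / 4 ≤ C := by
  refine ⟨lyapunov ξ g m (x 0) + ∫ r in Ici 0, errorCost A ξ fun i => e i r, fun t ht => ?_⟩
  have htail : ∫ r in 0..t, errorCost A ξ (fun i => e i r) ≤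
      ∫ r in Ici 0, errorCost A ξ fun i => e i r := by
    rw [intervalIntegral.integral_of_le ht]
    exact setIntegral_mono_set (integrable_errorCost A ξ he)
      (Eventually.of_forall fun r => errorCost_nonneg hA hξ _)
      (Eventually.of_forall fun r hr => hr.1.le)
  linarith [hx.lyapunov_sub_add_integral_dissipation_le hA hξ hξA hg he m le_rfl ht]

lemma mapClusterPt_dissipation_zero (hmono : Monotone g) :
    MapClusterPt 0 atTop fun t => dissipation A ξ fun i => g (x t i) := by
  obtain ⟨C, hC⟩ := hx.exists_forall_lyapunov_add_integral_dissipation_le hA hξ hξA hg he 0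
  exact mapClusterPt_zero_of_intervalIntegral_le (C := 4 * C) (hx.continuousOn_dissipation hg A ξ)
    (fun t => dissipation_nonneg hA hξ _)
    fun t ht => by linarith [hC t ht, lyapunov_nonneg (m := 0) hξ hmono (x t)]

end Dissipation

section Consensus

variable (hA : ∀ i j, 0 ≤ A i j)
  (hconn : ∀ i j, Relation.ReflTransGen (fun u v => 0 < A v u) i j) (hξ : ∀ i, 0 < ξ i)
  (hξ1 : ∑ i, ξ i = 1) (hξA : ξ ᵥ* weightedLaplacian A = 0) (hg : Continuous g)
  (hmono : Monotone g) (he : ∀ j, MemLp (e j) 2 (volume.restrict (Ici 0))) {m : ℝ}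
  (hm : ∑ i, ξ i * x 0 i = m)

include hx hA hξ hξ1 hξA hg hmono he hm

lemma exists_isCompact_eventually_mem (hgm : g (m - 1) < g (m + 1)) :
    ∃ K : Set (ι → ℝ), IsCompact K ∧ (∀ z ∈ K, ∑ i, ξ i * z i = m) ∧ ∀ᶠ t in atTop, x t ∈ K := by
  have hξ0 : ∀ i, 0 ≤ ξ i := fun i => (hξ i).le
  obtain ⟨C, hC⟩ := hx.exists_forall_lyapunov_add_integral_dissipation_le hA hξ0 hξA hg he m
  refine ⟨_, isCompact_lyapunov_sublevel hξ hξ1 hg hmono hgm C, fun z hz => hz.1,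
    (eventually_ge_atTop 0).mono fun t ht => ⟨?_, ?_⟩⟩
  · exact (hx.sum_smul_eq hg (fun j => locallyIntegrableOn_of_memLp_two_restrict (he j)) hξA
      ht).trans hm
  · have hdiss : 0 ≤ ∫ r in 0..t, dissipation A ξ fun i => g (x r i) :=
      intervalIntegral.integral_nonneg ht fun r _ => dissipation_nonneg hA hξ0 _
    linarith [hC t ht]

include hconn

lemma tendsto_weightedMean (hgm : ∀ a b, a < m → m < b → g a < g b) :
    Tendsto x atTop (𝓝 fun _ => m) := by
  have hξ0 : ∀ i, 0 ≤ ξ i := fun i => (hξ i).le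
  obtain ⟨K, hK, hmean, hxK⟩ := hx.exists_isCompact_eventually_mem hA hξ hξ1 hξA hg hmono he hm
    (hgm _ _ (sub_one_lt m) (lt_add_one m))
  have hconst : ∀ z ∈ K, (∀ i j, g (z i) = g (z j)) → z = fun _ => m := fun z hz =>
    eq_weightedMean_of_apply_eq hξ hξ1 hgm (hmean z hz)
  have hVcont : Continuous (lyapunov ξ g m) := continuous_lyapunov hg
  have hVcluster : MapClusterPt 0 atTop fun t => lyapunov ξ g m (x t) := by
    obtain ⟨z, hzK, hz, hDz⟩ := exists_mapClusterPt_of_mapClusterPt_comp hK hxK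
      ((continuous_dissipation A ξ).comp
        (by fun_prop : Continuous fun (z : ι → ℝ) i => g (z i)))
      (hx.mapClusterPt_dissipation_zero hA hξ0 hξA hg he hmono)
    rw [← lyapunov_const ξ g m, ← hconst z hzK (eq_of_dissipation_eq_zero hA hξ hconn hDz)]
    exact hz.continuousAt_comp hVcont.continuousAt
  have hVlim : Tendsto (fun t => lyapunov ξ g m (x t)) atTop (𝓝 0) :=
    tendsto_zero_of_sub_le_sub (fun t => lyapunov_nonneg hξ0 hmono (x t))
      (fun s t => hx.lyapunov_sub_le hA hξ0 hξA hg he m)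
      (intervalIntegral_tendsto_integral_Ioi 0
        (IntegrableOn.mono_set (integrable_errorCost A ξ he) Ioi_subset_Ici_self) tendsto_id)
      hVcluster
  refine hK.tendsto_nhds_of_unique_mapClusterPt hxK fun z hzK hz => hconst z hzK fun i j => ?_
  have hVz : lyapunov ξ g m z = 0 :=
    eq_of_mapClusterPt_of_tendsto (hz.continuousAt_comp hVcont.continuousAt) hVlim
  exact (apply_eq_of_lyapunov_eq_zero hξ hg hmono hVz i).trans
    (apply_eq_of_lyapunov_eq_zero hξ hg hmono hVz j).symm

end Consensus

end Scalar

end IsClosedLoopSolution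

lemma continuous_of_coordinatewise {κ : Type*} {g : ℝ → ℝ} (hg : Continuous g)
    {gv : EuclideanSpace ℝ κ → EuclideanSpace ℝ κ} (hgv : ∀ v l, gv v l = g (v l)) :
    Continuous gv := by
  have hof : Continuous fun v => (gv v).ofLp := by
    simp only [funext (hgv _)]
    fun_prop
  exact (PiLp.continuous_toLp 2 _).comp hof

lemma lt_of_strictMonoOn_Icc {X Y : Type*} [LinearOrder X] [Preorder Y] {g : X → Y} {p q m a b : X}
    (hg : Monotone g) (hpq : p < q) (hstrict : StrictMonoOn g (Icc p q)) (hm : m ∈ Icc p q)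
    (ha : a < m) (hb : m < b) : g a < g b := by
  have hlt : max a p < min b q :=
    max_lt (lt_min (ha.trans hb) (ha.trans_le hm.2)) (lt_min (hm.1.trans_lt hb) hpq)
  calc g a ≤ g (max a p) := hg (le_max_left a p)
    _ < g (min b q) := hstrict ⟨le_max_right a p, hlt.le.trans (min_le_right b q)⟩
      ⟨(le_max_right a p).trans hlt.le, min_le_right b q⟩ hlt
    _ ≤ g b := hg (min_le_left b q)

theorem event_triggered_consensus_strongly_connected_general {ι κ : Type*} [Fintype ι]
    [DecidableEq ι] [Fintype κ] {A : Matrix ι ι ℝ} (hA : ∀ i j, 0 ≤ A i j)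
    (hconn : ∀ i j, Relation.ReflTransGen (fun u v => 0 < A v u) i j) {ξ : ι → ℝ}
    (hξ : ∀ i, 0 < ξ i) (hξ1 : ∑ i, ξ i = 1) (hξA : ξ ᵥ* weightedLaplacian A = 0) {g : ℝ → ℝ}
    (hg : Continuous g) (hmono : Monotone g) {gv : EuclideanSpace ℝ κ → EuclideanSpace ℝ κ}
    (hgv : ∀ v l, gv v l = g (v l)) {e : ι → ℝ → EuclideanSpace ℝ κ}
    (he : ∀ j, MemLp (e j) 2 (volume.restrict (Ici 0))) {x : ℝ → ι → EuclideanSpace ℝ κ}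
    (hx : IsClosedLoopSolution (weightedLaplacian A) gv e x) {xbar : EuclideanSpace ℝ κ}
    (hxbar : xbar = ∑ i, ξ i • x 0 i) (hstrict : ∀ l a b, a < xbar l → xbar l < b → g a < g b) :
    Tendsto x atTop (𝓝 fun _ => xbar) := by
  have hcoord : ∀ l, Tendsto (fun t i => x t i l) atTop (𝓝 fun _ => xbar l) := fun l => by
    have hxl : IsClosedLoopSolution (weightedLaplacian A) g (fun j t => e j t l)
        (fun t i => x t i l) :=
      hx.map (continuous_of_coordinatewise hg hgv)
        (fun j => locallyIntegrableOn_of_memLp_two_restrict (he j))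
        (EuclideanSpace.proj (𝕜 := ℝ) l) (hgv · l)
    refine hxl.tendsto_weightedMean hA hconn hξ hξ1 hξA hg hmono
      (fun j => (EuclideanSpace.proj (𝕜 := ℝ) l).comp_memLp' (he j)) ?_ (hstrict l)
    simp [hxbar]
  refine tendsto_pi_nhds.mpr fun i => ?_
  have hofLp : Tendsto (fun t => (x t i).ofLp) atTop (𝓝 xbar.ofLp) :=
    tendsto_pi_nhds.mpr fun l => tendsto_pi_nhds.mp (hcoord l) i
  exact ((PiLp.continuous_toLp 2 _).tendsto _).comp hofLp

/-- Theorem 1, consensus: For a strongly connected weighted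
digraph with Laplacian `L` and positive left null vector `ξ` of unit sum,
a nonlinear output function `g` satisfying the first four parts of
Assumption 1 (extended componentwise to `ℝᵖ`), and measurement errors
`e_i` with `‖e_i(t)‖² ≤ α_i e^{−β_i t}`, any continuous solution of the
closed loop `x_i(t) = x_i(0) − ∫_0^t Σ_j L_{ij}(g(x_j(s)) + e_j(s)) ds`
converges to the weighted average `x̄ = Σ_i ξ_i x_i(0)` of the initial
states, provided `|x̄_l| ≤ h` for every component `l`. -/
theorem event_triggered_consensus_strongly_connected {n p : ℕ}
    (A : Matrix (Fin n) (Fin n) ℝ)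
    (hA_nonneg : ∀ i j, 0 ≤ A i j)
    (hA_diag : ∀ i, A i i = 0)
    (hconn : ∀ i j : Fin n, Relation.ReflTransGen (fun u v => 0 < A v u) i j)
    (L : Matrix (Fin n) (Fin n) ℝ)
    (hL : ∀ i j, L i j = (if i = j then ∑ k, A i k else 0) - A i j)
    (ξ : Fin n → ℝ) (hξpos : ∀ i, 0 < ξ i) (hξsum : ∑ i, ξ i = 1)
    (hξL : ∀ j, ∑ i, ξ i * L i j = 0)
    (h : ℝ) (hh : 0 < h)
    (g : ℝ → ℝ)
    (hg_cont : Continuous g)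
    (hg_mono : Monotone g)
    (hg_strict : StrictMonoOn g (Set.Icc (-h) h))
    (hg_zero : ∀ x, g x = 0 ↔ x = 0)
    (hg_lip : LocallyLipschitz g)
    (gv : EuclideanSpace ℝ (Fin p) → EuclideanSpace ℝ (Fin p))
    (hgv : ∀ v l, gv v l = g (v l))
    (α β : Fin n → ℝ) (hα : ∀ i, 0 < α i) (hβ : ∀ i, 0 < β i)
    (e : Fin n → ℝ → EuclideanSpace ℝ (Fin p))
    (he_meas : ∀ i, Measurable (e i))
    (he_bound : ∀ i, ∀ t : ℝ, 0 ≤ t → ‖e i t‖ ^ 2 ≤ α i * Real.exp (-β i * t))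
    (x : ℝ → Fin n → EuclideanSpace ℝ (Fin p))
    (hx_cont : ∀ i, ContinuousOn (fun t => x t i) (Set.Ici (0 : ℝ)))
    (hx_eq : ∀ i, ∀ t : ℝ, 0 ≤ t →
      x t i = x 0 i - ∫ s in (0 : ℝ)..t, ∑ j, L i j • (gv (x s j) + e j s))
    (xbar : EuclideanSpace ℝ (Fin p)) (hxbar : xbar = ∑ i, ξ i • x 0 i)
    (hxbar_le : ∀ l, |xbar l| ≤ h) :
    ∀ i, Tendsto (fun t => x t i) atTop (nhds xbar) := by
  obtain rfl : L = weightedLaplacian A := by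
    ext i j
    rw [hL, weightedLaplacian, Matrix.sub_apply, diagonal_apply]
  have hx : IsClosedLoopSolution (weightedLaplacian A) gv e x := ⟨hx_cont, hx_eq⟩
  have he : ∀ j, MemLp (e j) 2 (volume.restrict (Ici 0)) := fun j =>
    memLp_two_restrict_Ici_of_norm_sq_le_exp (hβ j) (he_meas j).aestronglyMeasurable (he_bound j)
  have hstrict : ∀ l a b, a < xbar l → xbar l < b → g a < g b := fun l a b =>
    lt_of_strictMonoOn_Icc hg_mono (by linarith) hg_strict (abs_le.mp (hxbar_le l))
  exact tendsto_pi_nhds.mp <| event_triggered_consensus_strongly_connected_general hA_nonneg hconn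
    hξpos hξsum (funext hξL) hg_cont hg_mono hgv he hx hxbar hstrict
end

section
/- (Theorem 2, consensus.) Let L ∈ ℝ^{n×n} be the Laplacian matrix of a weighted digraph that has a directed spanning tree, and let ξ ∈ ℝⁿ be a nonnegative vector with Σ_i ξ_i = 1 and ξᵀL = 0. Let h > 0 and let g : ℝ → ℝ be continuous, monotone nondecreasing on ℝ, strictly increasing on [−h, h], satisfy g(x) = 0 iff x = 0, be locally Lipschitz, and satisfy: there exists ϱ > 0 such that |g(x) − g(y)| ≥ ϱ|x − y| for all x, y ∈ [−h, h]; extend g componentwise to a map g : ℝᵖ → ℝᵖ. For each i let α_i > 0, β_i > 0 and let e_i : [0, ∞) → ℝᵖ be a measurable function with ‖e_i(t)‖² ≤ α_i e^{−β_i t} for all t ≥ 0. Let x : [0, ∞) → (Fin n → ℝᵖ) be continuous and satisfy for all i and all t ≥ 0: x_i(t) = x_i(0) − ∫_0^t Σ_{j=1}^n L_{ij} ( g(x_j(s)) + e_j(s) ) ds. Let ν = Σ_{i=1}^n ξ_i x_i(0) ∈ ℝᵖ and suppose every component of ν satisfies |ν_l| < h, l = 1, …, p. Then consensus is achieved: lim_{t→∞}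 x_i(t) = ν for every i ∈ {1, …, n}. -/
open Matrix Filter

/-! Let `E t` be the integral of `L e` over `(t, ∞)`, the contribution that the errors will still
make. In each coordinate `y = x - E` solves `y' = -L g(y + E)`, so `ξᵀ y` is conserved, and `E → 0`.

The outputs are read at `y + E`, so the largest entry of `y + E` does not increase through the flow
of `y`. Adding the integral of `‖L e‖` over `(t, ∞)` absorbs the motion of `E` and gives a
nonincreasing upper bound. Hence `y` is bounded above, and below by the symmetry `y ↦ -y`.

Along `y` the function `∑ i, ξ i * ∫_ν^{y i} (g - g ν)` has derivative
`-(1/2) ∑ i j, ξ i * A i j * (g (y i) - g (y j)) ^ 2 + o(1)`. On the compact set of bounded states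
with `ξᵀ y = ν` the sum vanishes only if `y i = ν` whenever `ξ i > 0`. So these coordinates converge
to `ν`, and the root of the spanning tree is among them.

For the other coordinates let `X i` be the limit superior of `y i`. If `(L g(X)) i` were positive,
`y i` would eventually decrease past a level below `X i`. So `L g(X) ≤ 0`, and the discrete maximum
principle along the tree gives `g (X i) ≤ g (X r) = g ν`. The symmetry `y ↦ -y` bounds the limit
inferior.
-/

open Set MeasureTheory Topology

section DigraphLaplacian

variable {ι R : Type*}

/-- The vertex `r` is the root of a directed spanning tree of the digraph with weights `A`, where
`0 < A i j` means that there is an edge from `j` to `i`. -/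
def IsSpanningRoot [Zero R] [LT R] (A : Matrix ι ι R) (r : ι) : Prop :=
  ∀ i, Relation.ReflTransGen (fun u v => 0 < A v u) r i

theorem IsSpanningRoot.of_predecessor_closed [Zero R] [LT R] {A : Matrix ι ι R} {r : ι}
    (hr : IsSpanningRoot A r) {P : ι → Prop} (hP : ∀ i j, 0 < A i j → P i → P j) {i : ι}
    (hi : P i) : P r :=
  (hr i).head_induction_on hi fun hedge _ hc => hP _ _ hedge hc

variable [Fintype ι]

/-- The edge energy of `u`, each edge into `i` being weighted by `ξ i`. For a left null vector `ξ`
of the Laplacian it is the dissipation of the `ξ`-weighted energy along the Laplacian flow. -/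
def disagreement [CommRing R] (A : Matrix ι ι R) (ξ u : ι → R) : R :=
  ∑ i, ∑ j, ξ i * A i j * (u i - u j) ^ 2

theorem disagreement_nonneg [CommRing R] [LinearOrder R] [IsStrictOrderedRing R]
    {A : Matrix ι ι R} {ξ : ι → R} (hA : ∀ i j, 0 ≤ A i j) (hξ : ∀ i, 0 ≤ ξ i) (u : ι → R) :
    0 ≤ disagreement A ξ u :=
  Finset.sum_nonneg fun i _ => Finset.sum_nonneg fun j _ =>
    mul_nonneg (mul_nonneg (hξ i) (hA i j)) (sq_nonneg _)

theorem eq_of_disagreement_eq_zero_of_edge [CommRing R] [LinearOrder R] [IsStrictOrderedRing R]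
    {A : Matrix ι ι R} {ξ : ι → R} (hA : ∀ i j, 0 ≤ A i j) (hξ : ∀ i, 0 ≤ ξ i) {u : ι → R}
    (hu : disagreement A ξ u = 0) {i j : ι} (hi : 0 < ξ i) (hij : 0 < A i j) : u i = u j := by
  have hterms : ∀ i j, 0 ≤ ξ i * A i j * (u i - u j) ^ 2 := fun i j =>
    mul_nonneg (mul_nonneg (hξ i) (hA i j)) (sq_nonneg _)
  have hrow := (Finset.sum_eq_zero_iff_of_nonneg fun i _ =>
    Finset.sum_nonneg fun j _ => hterms i j).1 hu i (Finset.mem_univ i)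
  have hterm := (Finset.sum_eq_zero_iff_of_nonneg fun j _ => hterms i j).1 hrow j
    (Finset.mem_univ j)
  exact sub_eq_zero.1 (pow_eq_zero_iff two_ne_zero |>.1
    ((mul_eq_zero.1 hterm).resolve_left (mul_pos hi hij).ne'))

variable [DecidableEq ι]

/-- The Laplacian of the digraph with weights `A`; a loop weight `A i i` cancels on the diagonal. -/
def digraphLaplacian [CommRing R] (A : Matrix ι ι R) : Matrix ι ι R :=
  diagonal (fun i => ∑ k, A i k) - A

theorem digraphLaplacian_mulVec_apply [CommRing R] (A : Matrix ι ι R) (u : ι → R) (i : ι) :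
    (digraphLaplacian A *ᵥ u) i = ∑ j, A i j * (u i - u j) := by
  rw [digraphLaplacian, sub_mulVec, Pi.sub_apply, mulVec_diagonal, Finset.sum_mul]
  simp only [mulVec, dotProduct, mul_sub, Finset.sum_sub_distrib]

theorem dotProduct_digraphLaplacian_mulVec_eq_zero [CommRing R] {A : Matrix ι ι R} {ξ : ι → R}
    (hξL : ξ ᵥ* digraphLaplacian A = 0) (u : ι → R) : ξ ⬝ᵥ (digraphLaplacian A *ᵥ u) = 0 := by
  rw [dotProduct_mulVec, hξL, zero_dotProduct]

theorem two_mul_sum_sub_mul_digraphLaplacian_mulVec [CommRing R] {A : Matrix ι ι R} {ξ : ι → R}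
    (hξL : ξ ᵥ* digraphLaplacian A = 0) (u : ι → R) (c : R) :
    2 * ∑ i, ξ i * ((u i - c) * (digraphLaplacian A *ᵥ u) i) = disagreement A ξ u := by
  have hsq := dotProduct_digraphLaplacian_mulVec_eq_zero hξL fun i => (u i - c) ^ 2
  simp only [dotProduct, digraphLaplacian_mulVec_apply, Finset.mul_sum] at hsq
  rw [← add_zero (disagreement A ξ u), ← hsq]
  simp only [disagreement, digraphLaplacian_mulVec_apply, Finset.mul_sum,
    ← Finset.sum_add_distrib]
  exact Finset.sum_congr rfl fun i _ => Finset.sum_congr rfl fun j _ => by ring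

variable [CommRing R] [LinearOrder R] [IsStrictOrderedRing R] {A : Matrix ι ι R} {ξ : ι → R}

theorem digraphLaplacian_mulVec_nonneg_of_forall_le (hA : ∀ i j, 0 ≤ A i j) {u : ι → R} {i : ι}
    (hi : ∀ j, u j ≤ u i) : 0 ≤ (digraphLaplacian A *ᵥ u) i := by
  rw [digraphLaplacian_mulVec_apply]
  exact Finset.sum_nonneg fun j _ => mul_nonneg (hA i j) (sub_nonneg.2 (hi j))

theorem le_root_of_digraphLaplacian_mulVec_nonpos (hA : ∀ i j, 0 ≤ A i j) {r : ι}
    (hr : IsSpanningRoot A r) {u : ι → R} (hu : ∀ i, (digraphLaplacian A *ᵥ u) i ≤ 0) (i : ι) :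
    u i ≤ u r := by
  have : Nonempty ι := ⟨r⟩
  obtain ⟨k, hk⟩ := Finite.exists_max u
  refine hr.of_predecessor_closed (P := fun j => ∀ i, u i ≤ u j) (fun m j hmj hm => ?_) hk i
  have hterms : ∀ l ∈ Finset.univ, 0 ≤ A m l * (u m - u l) := fun l _ =>
    mul_nonneg (hA m l) (sub_nonneg.2 (hm l))
  have hsum : ∑ l, A m l * (u m - u l) = 0 :=
    le_antisymm (digraphLaplacian_mulVec_apply A u m ▸ hu m) (Finset.sum_nonneg hterms)
  have hterm := (Finset.sum_eq_zero_iff_of_nonneg hterms).1 hsum j (Finset.mem_univ j)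
  rwa [← sub_eq_zero.1 ((mul_eq_zero.1 hterm).resolve_left hmj.ne')]

theorem leftNull_pos_of_edge (hA : ∀ i j, 0 ≤ A i j) (hξ : ∀ i, 0 ≤ ξ i)
    (hξL : ξ ᵥ* digraphLaplacian A = 0) {i j : ι} (hij : 0 < A i j) (hi : 0 < ξ i) : 0 < ξ j := by
  refine (hξ j).lt_of_ne' fun hj => (mul_pos hi hij).ne' ?_
  have hin : ∑ i, ξ i * A i j = 0 := by
    have hcol := congrFun hξL j
    rw [digraphLaplacian, vecMul_sub, Pi.sub_apply, vecMul_diagonal, hj, zero_mul, zero_sub,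
      Pi.zero_apply, neg_eq_zero] at hcol
    exact hcol
  exact (Finset.sum_eq_zero_iff_of_nonneg fun i _ => mul_nonneg (hξ i) (hA i j)).1 hin i
    (Finset.mem_univ i)

theorem IsSpanningRoot.leftNull_pos {r : ι} (hr : IsSpanningRoot A r) (hA : ∀ i j, 0 ≤ A i j)
    (hξ : ∀ i, 0 ≤ ξ i) (hξL : ξ ᵥ* digraphLaplacian A = 0) (hξ0 : ∑ i, ξ i ≠ 0) : 0 < ξ r := by
  obtain ⟨i, -, hi⟩ := Finset.exists_ne_zero_of_sum_ne_zero hξ0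
  exact hr.of_predecessor_closed (fun _ _ => leftNull_pos_of_edge hA hξ hξL)
    ((hξ i).lt_of_ne' hi)

theorem IsSpanningRoot.eq_of_disagreement_eq_zero {r : ι} (hr : IsSpanningRoot A r)
    (hA : ∀ i j, 0 ≤ A i j) (hξ : ∀ i, 0 ≤ ξ i) (hξL : ξ ᵥ* digraphLaplacian A = 0)
    {u : ι → R} (hu : disagreement A ξ u = 0) {i : ι} (hi : 0 < ξ i) : u i = u r :=
  (hr.of_predecessor_closed (P := fun j => 0 < ξ j ∧ u i = u j)
    (fun _ _ hjk hj => ⟨leftNull_pos_of_edge hA hξ hξL hjk hj.1,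
      hj.2.trans (eq_of_disagreement_eq_zero_of_edge hA hξ hu hj.1 hjk)⟩) ⟨hi, rfl⟩).2

/-- The average of `(w i - ν) * (g (w i) - g ν)` vanishes because its second factor does not depend
on `i`, while each term is nonnegative. -/
theorem IsSpanningRoot.eq_average_of_disagreement_eq_zero {r : ι} (hr : IsSpanningRoot A r)
    (hA : ∀ i j, 0 ≤ A i j) (hξ : ∀ i, 0 ≤ ξ i) (hξ1 : ∑ i, ξ i = 1)
    (hξL : ξ ᵥ* digraphLaplacian A = 0) {g : R → R} (hg : Monotone g) {ν : R}
    (hν : ∀ z, g z = g ν → z = ν) {w : ι → R} (hw : ξ ⬝ᵥ w = ν)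
    (hd : disagreement A ξ (fun i => g (w i)) = 0) {i : ι} (hi : 0 < ξ i) : w i = ν := by
  have hgw : ∀ j, 0 < ξ j → g (w j) = g (w r) := fun j hj =>
    hr.eq_of_disagreement_eq_zero hA hξ hξL (u := fun i => g (w i)) hd hj
  have hnonneg : ∀ j ∈ Finset.univ, 0 ≤ ξ j * ((w j - ν) * (g (w j) - g ν)) := fun j _ =>
    mul_nonneg (hξ j) (monovary_iff_forall_mul_nonneg.1 (monotone_id.monovary hg) ν (w j))
  have hsum : ∑ j, ξ j * ((w j - ν) * (g (w j) - g ν)) = 0 := calc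
    _ = ∑ j, (ξ j * w j - ξ j * ν) * (g (w r) - g ν) := Finset.sum_congr rfl fun j _ => by
        rcases (hξ j).eq_or_lt with hj | hj
        · simp only [← hj, zero_mul, sub_zero]
        · rw [hgw j hj]; ring
    _ = (ξ ⬝ᵥ w - (∑ j, ξ j) * ν) * (g (w r) - g ν) := by
        rw [← Finset.sum_mul, Finset.sum_sub_distrib, ← Finset.sum_mul, dotProduct]
    _ = 0 := by rw [hw, hξ1, one_mul, sub_self, zero_mul]
  have hterm := (Finset.sum_eq_zero_iff_of_nonneg hnonneg).1 hsum i (Finset.mem_univ i)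
  rcases mul_eq_zero.1 ((mul_eq_zero.1 hterm).resolve_left hi.ne') with h | h
  · exact sub_eq_zero.1 h
  · exact hν _ (sub_eq_zero.1 h)

end DigraphLaplacian

section DifferentialInequalities

theorem exists_le_of_hasDerivWithinAt_le_neg {f f' : ℝ → ℝ} {T c γ : ℝ} (hγ : 0 < γ)
    (hf : ∀ t ∈ Ici T, HasDerivWithinAt f (f' t) (Ici T) t)
    (hle : ∀ t ∈ Ici T, c ≤ f t → f' t ≤ -γ) : ∃ t ∈ Ici T, f t ≤ c := by
  by_contra! habove
  have hpos : 0 < (f T - c) / γ := div_pos (sub_pos.2 (habove T self_mem_Ici)) hγ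
  have hline : ∀ t, HasDerivAt (fun t => f T - γ * (t - T)) (-γ) t := fun t => by
    simpa using (((hasDerivAt_id t).sub_const T).const_mul γ).const_sub (f T)
  have hdecay := image_le_of_deriv_right_le_deriv_boundary (f := f) (a := T)
    (b := T + (f T - c) / γ) (fun t ht => (hf t ht.1).continuousWithinAt.mono Icc_subset_Ici_self)
    (fun t ht => (hf t ht.1).mono (Ici_subset_Ici.2 ht.1)) (by simp : f T ≤ f T - γ * (T - T))
    (HasDerivAt.continuousOn fun t _ => hline t) (fun t _ => (hline t).hasDerivWithinAt)
    (fun t ht => hle t ht.1 (habove t ht.1).le) (right_mem_Icc.2 (by linarith))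
  rw [add_sub_cancel_left, mul_div_cancel₀ _ hγ.ne', sub_sub_cancel] at hdecay
  exact (habove _ (mem_Ici.2 (by linarith))).not_ge hdecay

theorem eventually_le_of_hasDerivWithinAt_le_neg {f f' : ℝ → ℝ} {T c γ : ℝ} (hγ : 0 < γ)
    (hf : ∀ t ∈ Ici T, HasDerivWithinAt f (f' t) (Ici T) t)
    (hle : ∀ t ∈ Ici T, c ≤ f t → f' t ≤ -γ) : ∀ᶠ t in atTop, f t ≤ c := by
  obtain ⟨t₁, ht₁, hft₁⟩ := exists_le_of_hasDerivWithinAt_le_neg hγ hf hle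
  filter_upwards [eventually_ge_atTop t₁] with t ht
  exact image_le_of_deriv_right_lt_deriv_boundary (B := fun _ => c)
    (fun s hs => (hf s (ht₁.trans hs.1)).continuousWithinAt.mono fun _ h => ht₁.trans h.1)
    (fun s hs => (hf s (ht₁.trans hs.1)).mono (Ici_subset_Ici.2 (ht₁.trans hs.1))) hft₁
    (fun s => hasDerivAt_const s c)
    (fun s hs hsc => (hle s (ht₁.trans hs.1) hsc.ge).trans_lt (neg_neg_of_pos hγ))
    (right_mem_Icc.2 ht)

theorem eventually_le_of_lyapunov_on_compact {X Y : Type*} [TopologicalSpace X]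
    [TopologicalSpace Y] {C : Set X} (hC : IsCompact C) {V : X → ℝ} (hV : Continuous V)
    {Φ : Y → X → ℝ} (hΦ : Continuous fun p : Y × X => Φ p.1 p.2) {y : ℝ → X} {E : ℝ → Y} {e₀ : Y}
    {a c : ℝ} (hy : ∀ᶠ t in atTop, y t ∈ C) (hE : Tendsto E atTop (𝓝 e₀))
    (hVy : ∀ t ∈ Ici a, HasDerivWithinAt (fun t => V (y t)) (Φ (E t) (y t)) (Ici a) t)
    (hneg : ∀ u ∈ C, c ≤ V u → Φ e₀ u < 0) : ∀ᶠ t in atTop, V (y t) ≤ c := by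
  have hS : IsCompact (C ∩ {u | c ≤ V u}) := hC.inter_right (isClosed_le continuous_const hV)
  obtain ⟨γ, hγ, hΦγ⟩ := hS.exists_forall_le' (f := fun u => -Φ e₀ u) (a := 0)
    (by fun_prop) fun u hu => neg_pos.2 (hneg u hu.1 hu.2)
  have hnear : ∀ᶠ e in 𝓝 e₀, ∀ u ∈ C ∩ {u | c ≤ V u}, Φ e u < -(γ / 2) :=
    hS.eventually_forall_of_forall_eventually fun u hu =>
      hΦ.continuousAt.eventually_lt_const (by linarith [hΦγ u hu])
  obtain ⟨T, hT⟩ := eventually_atTop.1 (hy.and (hE.eventually hnear))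
  refine eventually_le_of_hasDerivWithinAt_le_neg (half_pos hγ) (T := max a T)
    (fun t ht => (hVy t (le_of_max_le_left (mem_Ici.1 ht))).mono
      (Ici_subset_Ici.2 (le_max_left _ _)))
    fun t ht hct => ?_
  obtain ⟨hyC, hΦt⟩ := hT t (le_of_max_le_right (mem_Ici.1 ht))
  exact (hΦt _ ⟨hyC, hct⟩).le

variable {ι : Type*} [Finite ι]

theorem forall_le_add_mul_of_slope_le_at_max {u : ℝ → ι → ℝ} {a M ε : ℝ}
    (hu : ContinuousOn u (Ici a)) (ha : ∀ i, u a i ≤ M)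
    (hmax : ∀ t ∈ Ici a, ∀ i, (∀ j, u t j ≤ u t i) →
      ∀ᶠ s in 𝓝[>] t, u s i ≤ u t i + ε * (s - t)) :
    ∀ t ∈ Ici a, ∀ i, u t i ≤ M + ε * (t - a) := by
  intro t ht
  have hclosed : IsClosed ({s | ∀ i, u s i ≤ M + ε * (s - a)} ∩ Icc a t) := by
    rw [inter_comm]
    exact isClosed_Icc.isClosed_le (f := u) (g := fun s _ => M + ε * (s - a))
      (hu.mono Icc_subset_Ici_self) (by fun_prop)
  refine hclosed.Icc_subset_of_forall_mem_nhdsWithin (by simpa using ha) (fun s hs => ?_)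
    (right_mem_Icc.2 ht)
  refine eventually_all.2 fun i => ?_
  rcases (hs.1 i).lt_or_eq with hlt | heq
  · have hcont : ContinuousWithinAt (fun s => u s i) (Ioi s) s :=
      ((continuousOn_pi.1 hu i) s hs.2.1).mono fun _ h => hs.2.1.trans (le_of_lt h)
    exact (hcont.eventually_lt (Continuous.continuousWithinAt (by fun_prop)) hlt).mono
      fun _ h => h.le
  · filter_upwards [hmax s hs.2.1 i fun j => heq ▸ hs.1 j] with z hz
    linarith

theorem forall_le_of_hasDerivWithinAt_nonpos_at_max {F F' R : ℝ → ι → ℝ} {a M : ℝ}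
    (hF : ∀ t ∈ Ici a, HasDerivWithinAt F (F' t) (Ici a) t) (hR : ContinuousOn R (Ici a))
    (hR_anti : AntitoneOn R (Ici a)) (ha : ∀ i, F a i + R a i ≤ M)
    (hmax : ∀ t ∈ Ici a, ∀ i, (∀ j, F t j + R t j ≤ F t i + R t i) → F' t i ≤ 0) :
    ∀ t ∈ Ici a, ∀ i, F t i + R t i ≤ M := by
  have := Fintype.ofFinite ι
  intro t ht i
  have hbarrier : ∀ ε > 0, F t i + R t i ≤ M + ε * (t - a) := fun ε hε => by
    refine forall_le_add_mul_of_slope_le_at_max (u := F + R)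
      (ContinuousOn.add (fun s hs => (hF s hs).continuousWithinAt) hR) ha
      (fun s hs j hj => ?_) t ht i
    have hslope := ((hasDerivWithinAt_pi.1 (hF s hs) j).mono
      (Ioi_subset_Ici hs)).limsup_slope_le' self_notMem_Ioi ((hmax s hs j hj).trans_lt hε)
    filter_upwards [hslope, self_mem_nhdsWithin] with z hz hsz
    rw [slope_def_field, div_lt_iff₀ (sub_pos.2 hsz)] at hz
    have hRz := hR_anti hs (mem_Ici.1 hs |>.trans (le_of_lt hsz)) (le_of_lt hsz) j
    simp only [Pi.add_apply]
    linarith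
  refine ge_of_tendsto (f := fun ε => M + ε * (t - a)) (x := 𝓝[>] 0) ?_
    (eventually_mem_nhdsWithin.mono hbarrier)
  exact (Continuous.tendsto' (by fun_prop) 0 M (by simp)).mono_left nhdsWithin_le_nhds

end DifferentialInequalities

section Convergence

theorem tendsto_of_tendsto_zero_of_compact {X α : Type*} [TopologicalSpace X] {C : Set X}
    (hC : IsCompact C) {H : X → ℝ} (hH : Continuous H) {u₀ : X} (hu₀ : ∀ u ∈ C, H u = 0 → u = u₀)
    {l : Filter α} {y : α → X} (hy : ∀ᶠ t in l, y t ∈ C) (hHy : Tendsto (H ∘ y) l (𝓝 0)) :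
    Tendsto y l (𝓝 u₀) :=
  hC.tendsto_nhds_of_unique_mapClusterPt hy fun u hu hcluster => hu₀ u hu <|
    eq_of_nhds_neBot <| ((hcluster.continuousAt_comp hH.continuousAt).neBot).mono
      (inf_le_inf_left _ hHy)

theorem norm_integral_Ioi_sub_integral_Ioi_le {E : Type*} [NormedAddCommGroup E]
    [NormedSpace ℝ E] {f : ℝ → E} {a b : ℝ} (hf : IntegrableOn f (Ioi a)) (hab : a ≤ b) :
    ‖(∫ s in Ioi b, f s) - ∫ s in Ioi a, f s‖ ≤ (∫ s in Ioi a, ‖f s‖) - ∫ s in Ioi b, ‖f s‖ := by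
  rw [norm_sub_rev, intervalIntegral.integral_Ioi_sub_Ioi hf hab,
    intervalIntegral.integral_Ioi_sub_Ioi hf.norm hab]
  exact intervalIntegral.norm_integral_le_integral_norm hab

theorem hasDerivWithinAt_integral_Ici {E : Type*} [NormedAddCommGroup E] [NormedSpace ℝ E]
    [CompleteSpace E] {f : ℝ → E} {a t : ℝ} (hf : ContinuousOn f (Ici a)) (ht : t ∈ Ici a) :
    HasDerivWithinAt (fun t => ∫ s in a..t, f s) (f t) (Ici a) t := by
  have hext : Continuous fun s => f (max a s) :=
    hf.comp_continuous (by fun_prop) fun s => le_max_left a s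
  have hderiv := (hext.integral_hasStrictDerivAt a t).hasDerivAt.hasDerivWithinAt (s := Ici a)
  rw [max_eq_right ht] at hderiv
  have hagree : ∀ t ∈ Ici a, ∫ s in a..t, f s = ∫ s in a..t, f (max a s) := fun t ht =>
    intervalIntegral.integral_congr fun s hs => by
      rw [max_eq_right (uIcc_of_le (mem_Ici.1 ht) ▸ hs).1]
  exact hderiv.congr hagree (hagree t ht)

end Convergence

section OutputPotential

/-- The potential `z ↦ ∫_ν^z (g s - g ν) ds` of the output `g` centred at `ν`, the building block of
the Lyapunov function of the consensus dynamics. -/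
noncomputable def outputPotential (g : ℝ → ℝ) (ν z : ℝ) : ℝ :=
  ∫ s in ν..z, (g s - g ν)

variable {g : ℝ → ℝ} {ν : ℝ}

theorem outputPotential_self : outputPotential g ν ν = 0 :=
  intervalIntegral.integral_same

theorem hasDerivAt_outputPotential (hg : Continuous g) (z : ℝ) :
    HasDerivAt (outputPotential g ν) (g z - g ν) z :=
  ((hg.sub continuous_const).integral_hasStrictDerivAt ν z).hasDerivAt

theorem continuous_outputPotential (hg : Continuous g) : Continuous (outputPotential g ν) :=
  continuous_iff_continuousAt.2 fun z => (hasDerivAt_outputPotential hg z).continuousAt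

theorem outputPotential_nonneg (hg : Monotone g) (z : ℝ) : 0 ≤ outputPotential g ν z := by
  rcases le_total ν z with h | h
  · exact intervalIntegral.integral_nonneg h fun s hs => sub_nonneg.2 (hg hs.1)
  · rw [outputPotential, intervalIntegral.integral_symm, ← intervalIntegral.integral_neg]
    exact intervalIntegral.integral_nonneg h fun s hs => neg_nonneg.2 (sub_nonpos.2 (hg hs.2))

theorem outputPotential_pos (hg : Continuous g) (hg_mono : Monotone g)
    (hν : ∀ z, g z = g ν → z = ν) {z : ℝ} (hz : z ≠ ν) : 0 < outputPotential g ν z := by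
  have hint : ∀ a b, IntervalIntegrable (fun s => g s - g ν) volume a b := fun a b =>
    (hg.sub continuous_const).intervalIntegrable a b
  rcases hz.lt_or_gt with hlt | hgt
  · rw [outputPotential, intervalIntegral.integral_symm, ← intervalIntegral.integral_neg]
    exact intervalIntegral.intervalIntegral_pos_of_pos_on (hint z ν).neg (fun s hs =>
      neg_pos.2 (sub_neg.2 ((hg_mono hs.2.le).lt_of_ne (mt (hν s) hs.2.ne)))) hlt
  · exact intervalIntegral.intervalIntegral_pos_of_pos_on (hint ν z) (fun s hs =>
      sub_pos.2 ((hg_mono hs.1.le).lt_of_ne' (mt (hν s) hs.1.ne'))) hgt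

end OutputPotential

section PerturbedFlow

/-- `y` follows the Laplacian flow on `[0, ∞)` whose outputs are read at the perturbed state
`y + E`. The closed loop has this form once `y` is taken to be the state minus the contribution `E`
that the measurement errors will still make. -/
def IsPerturbedFlow {ι : Type*} [Fintype ι] [DecidableEq ι] (A : Matrix ι ι ℝ) (g : ℝ → ℝ)
    (y E : ℝ → ι → ℝ) : Prop :=
  ∀ t ∈ Ici (0 : ℝ), HasDerivWithinAt y
    (-(digraphLaplacian A *ᵥ fun i => g (y t i + E t i))) (Ici 0) t

namespace IsPerturbedFlow

variable {ι : Type*} [Fintype ι] [DecidableEq ι] {A : Matrix ι ι ℝ} {g : ℝ → ℝ}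
  {y E : ℝ → ι → ℝ} {ξ a b : ι → ℝ} {r : ι} {ν : ℝ}

theorem hasDerivWithinAt_apply (hy : IsPerturbedFlow A g y E) (i : ι) {t : ℝ} (ht : t ∈ Ici 0) :
    HasDerivWithinAt (fun t => y t i)
      (-(digraphLaplacian A *ᵥ fun i => g (y t i + E t i)) i) (Ici 0) t :=
  hasDerivWithinAt_pi.1 (hy t ht) i

protected theorem neg (hy : IsPerturbedFlow A g y E) :
    IsPerturbedFlow A (fun z => -g (-z)) (-y) (-E) := fun t ht => by
  refine (hy t ht).neg.congr_deriv ?_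
  rw [← mulVec_neg]
  congr 2
  ext i
  simp only [Pi.neg_apply, ← neg_add, neg_neg]

theorem dotProduct_eq (hy : IsPerturbedFlow A g y E) (hξL : ξ ᵥ* digraphLaplacian A = 0)
    {t : ℝ} (ht : t ∈ Ici 0) : ξ ⬝ᵥ y t = ξ ⬝ᵥ y 0 := by
  have hderiv : ∀ s ∈ Ici (0 : ℝ), HasDerivWithinAt (fun s => ξ ⬝ᵥ y s) 0 (Ici 0) s :=
    fun s hs => by
      have hsum := HasDerivWithinAt.fun_sum (u := Finset.univ) fun i _ =>
        (hy.hasDerivWithinAt_apply i hs).const_mul (ξ i)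
      simp only [mul_neg, Finset.sum_neg_distrib] at hsum
      exact hsum.congr_deriv (neg_eq_zero.2 (dotProduct_digraphLaplacian_mulVec_eq_zero hξL _))
  exact constant_of_has_deriv_right_zero (fun s hs => (hderiv s hs.1).continuousWithinAt.mono
    Icc_subset_Ici_self) (fun s hs => (hderiv s hs.1).mono (Ici_subset_Ici.2 hs.1)) t
    (right_mem_Icc.2 ht)

theorem exists_forall_le {w : ℝ → ι → ℝ} (hy : IsPerturbedFlow A g y fun t => ∫ s in Ioi t, w s)
    (hA : ∀ i j, 0 ≤ A i j) (hg : Monotone g) (hw : IntegrableOn w (Ioi 0)) :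
    ∃ b : ι → ℝ, ∀ t ∈ Ici 0, y t ≤ b := by
  set E : ℝ → ι → ℝ := fun t => ∫ s in Ioi t, w s
  set N : ℝ → ℝ := fun t => ∫ s in Ioi t, ‖w s‖
  have htail : ∀ s ∈ Ici 0, ∀ t ∈ Ici s, ∀ i, |E t i - E s i| ≤ N s - N t := fun s hs t ht i =>
    (norm_le_pi_norm (E t - E s) i).trans <|
      norm_integral_Ioi_sub_integral_Ioi_le (hw.mono_set (Ioi_subset_Ioi hs)) ht
  have hN : ∀ t, 0 ≤ N t := fun t => integral_nonneg fun s => norm_nonneg (w s)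
  obtain ⟨M, hM⟩ := (finite_range fun i => y 0 i + (E 0 i + N 0)).bddAbove
  have hmax := forall_le_of_hasDerivWithinAt_nonpos_at_max (F := y) (M := M)
    (R := fun t i => E t i + N t) hy
    (hw.continuousOn_Ici_primitive_Ioi.add (continuousOn_pi.2 fun _ =>
      IntegrableOn.continuousOn_Ici_primitive_Ioi hw.norm))
    (fun s hs t _ hst i => by
      have := (abs_le.1 (htail s hs t hst i)).2
      simp only
      linarith)
    (fun i => hM (mem_range_self i)) fun t _ i hi => neg_nonpos.2 <|
      digraphLaplacian_mulVec_nonneg_of_forall_le hA fun j => hg (by linarith [hi j])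
  refine ⟨fun i => M - E 0 i + N 0, fun t ht i => ?_⟩
  have := (abs_le.1 (htail 0 self_mem_Ici t ht i)).1
  linarith [hmax t ht i, hN t]

theorem exists_forall_mem_Icc {w : ℝ → ι → ℝ}
    (hy : IsPerturbedFlow A g y fun t => ∫ s in Ioi t, w s)
    (hA : ∀ i j, 0 ≤ A i j) (hg : Monotone g) (hw : IntegrableOn w (Ioi 0)) :
    ∃ a b : ι → ℝ, ∀ t ∈ Ici 0, y t ∈ Icc a b := by
  obtain ⟨b, hb⟩ := hy.exists_forall_le hA hg hw
  have hneg : IsPerturbedFlow A (fun z => -g (-z)) (-y) fun t => ∫ s in Ioi t, (-w) s := by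
    convert hy.neg using 1
    ext1 t
    exact integral_neg w
  obtain ⟨a, ha⟩ := hneg.exists_forall_le hA (fun _ _ h => neg_le_neg (hg (neg_le_neg h))) hw.neg
  exact ⟨-a, b, fun t ht => ⟨neg_le.1 (ha t ht), hb t ht⟩⟩

theorem tendsto_sum_outputPotential (hy : IsPerturbedFlow A g y E) (hA : ∀ i j, 0 ≤ A i j)
    (hr : IsSpanningRoot A r) (hξ : ∀ i, 0 ≤ ξ i) (hξ1 : ∑ i, ξ i = 1)
    (hξL : ξ ᵥ* digraphLaplacian A = 0) (hg : Continuous g) (hg_mono : Monotone g)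
    (hν : ∀ z, g z = g ν → z = ν) (hE : Tendsto E atTop (𝓝 0))
    (hbdd : ∀ t ∈ Ici 0, y t ∈ Icc a b) (hmean : ξ ⬝ᵥ y 0 = ν) :
    Tendsto (fun t => ∑ i, ξ i * outputPotential g ν (y t i)) atTop (𝓝 0) := by
  set V : (ι → ℝ) → ℝ := fun u => ∑ i, ξ i * outputPotential g ν (u i)
  have hcontV : Continuous V := continuous_finsetSum _ fun i _ =>
    continuous_const.mul ((continuous_outputPotential hg).comp (continuous_apply i))
  have hV_nonneg : ∀ u, 0 ≤ V u := fun u =>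
    Finset.sum_nonneg fun i _ => mul_nonneg (hξ i) (outputPotential_nonneg hg_mono _)
  have hC : IsCompact (Icc a b ∩ {u | ξ ⬝ᵥ u = ν}) :=
    isCompact_Icc.inter_right (isClosed_eq (by fun_prop) continuous_const)
  set Φ : (ι → ℝ) → (ι → ℝ) → ℝ := fun e u =>
    ∑ i, ξ i * ((g (u i) - g ν) * -(digraphLaplacian A *ᵥ fun i => g (u i + e i)) i)
  have hderiv : ∀ t ∈ Ici (0 : ℝ), HasDerivWithinAt (fun t => V (y t)) (Φ (E t) (y t)) (Ici 0) t :=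
    fun t ht => HasDerivWithinAt.fun_sum fun i _ =>
      ((hasDerivAt_outputPotential hg _).comp_hasDerivWithinAt t
        (hy.hasDerivWithinAt_apply i ht)).const_mul _
  have hdissipation : ∀ u, 2 * Φ 0 u = -disagreement A ξ fun i => g (u i) := fun u => by
    rw [← two_mul_sum_sub_mul_digraphLaplacian_mulVec hξL _ (g ν)]
    simp only [Φ, Pi.zero_apply, add_zero, mul_neg, Finset.sum_neg_distrib]
  have hsmall : ∀ c > 0, ∀ᶠ t in atTop, V (y t) ≤ c := fun c hc => by
    refine eventually_le_of_lyapunov_on_compact hC hcontV (Φ := Φ) (by fun_prop)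
      ((eventually_ge_atTop 0).mono fun t ht => ⟨hbdd t ht, (hy.dotProduct_eq hξL ht).trans hmean⟩)
      hE hderiv fun u hu hcu => ?_
    have hd := disagreement_nonneg hA hξ fun i => g (u i)
    refine (by linarith [hdissipation u] : Φ 0 u ≤ 0).lt_of_ne fun hΦ => (hc.trans_le hcu).ne' ?_
    refine Finset.sum_eq_zero fun i _ => ?_
    rcases (hξ i).eq_or_lt with hi | hi
    · rw [← hi, zero_mul]
    · rw [hr.eq_average_of_disagreement_eq_zero hA hξ hξ1 hξL hg_mono hν hu.2
        (by linarith [hdissipation u]) hi, outputPotential_self, mul_zero]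
  exact tendsto_order.2 ⟨fun c hc => .of_forall fun t => hc.trans_le (hV_nonneg _),
    fun c hc => (hsmall _ (half_pos hc)).mono fun t ht => ht.trans_lt (half_lt_self hc)⟩

theorem tendsto_of_leftNull_pos (hy : IsPerturbedFlow A g y E) (hA : ∀ i j, 0 ≤ A i j)
    (hr : IsSpanningRoot A r) (hξ : ∀ i, 0 ≤ ξ i) (hξ1 : ∑ i, ξ i = 1)
    (hξL : ξ ᵥ* digraphLaplacian A = 0) (hg : Continuous g) (hg_mono : Monotone g)
    (hν : ∀ z, g z = g ν → z = ν) (hE : Tendsto E atTop (𝓝 0))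
    (hbdd : ∀ t ∈ Ici 0, y t ∈ Icc a b) (hmean : ξ ⬝ᵥ y 0 = ν) {i : ι} (hi : 0 < ξ i) :
    Tendsto (fun t => y t i) atTop (𝓝 ν) := by
  have hterm : Tendsto (fun t => ξ i * outputPotential g ν (y t i)) atTop (𝓝 0) :=
    squeeze_zero (fun t => mul_nonneg hi.le (outputPotential_nonneg hg_mono _))
      (fun t => Finset.single_le_sum
        (fun j _ => mul_nonneg (hξ j) (outputPotential_nonneg hg_mono (y t j))) (Finset.mem_univ i))
      (hy.tendsto_sum_outputPotential hA hr hξ hξ1 hξL hg hg_mono hν hE hbdd hmean)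
  refine tendsto_of_tendsto_zero_of_compact (isCompact_Icc (a := a i) (b := b i))
    (continuous_const.mul (continuous_outputPotential hg)) (fun z _ hz => ?_)
    ((eventually_ge_atTop 0).mono fun t ht => ⟨(hbdd t ht).1 i, (hbdd t ht).2 i⟩) hterm
  by_contra hzν
  exact (mul_pos hi (outputPotential_pos hg hg_mono hν hzν)).ne' hz

theorem digraphLaplacian_mulVec_limsup_nonpos (hy : IsPerturbedFlow A g y E)
    (hA : ∀ i j, 0 ≤ A i j) (hg : Continuous g) (hg_mono : Monotone g)
    (hE : Tendsto E atTop (𝓝 0)) (hbdd : ∀ t ∈ Ici 0, y t ∈ Icc a b) (i : ι) :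
    (digraphLaplacian A *ᵥ fun j => g (limsup (fun t => y t j) atTop)) i ≤ 0 := by
  set X : ι → ℝ := fun j => limsup (fun t => y t j) atTop
  have hbddAbove : ∀ j, IsBoundedUnder (· ≤ ·) atTop fun t => y t j := fun j =>
    ⟨b j, eventually_map.2 ((eventually_ge_atTop 0).mono fun t ht => (hbdd t ht).2 j)⟩
  have hbddBelow : ∀ j, IsBoundedUnder (· ≥ ·) atTop fun t => y t j := fun j =>
    ⟨a j, eventually_map.2 ((eventually_ge_atTop 0).mono fun t ht => (hbdd t ht).1 j)⟩
  by_contra! hpos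
  rw [digraphLaplacian_mulVec_apply] at hpos
  have hcont : Continuous fun ε : ℝ => ∑ j, A i j * (g (X i - ε) - g (X j + ε)) := by fun_prop
  have hzero : 0 < ∑ j, A i j * (g (X i - 0) - g (X j + 0)) := by
    simpa only [sub_zero, add_zero] using hpos
  have hsmall := (hcont.continuousAt.eventually_const_lt hzero).filter_mono
    (nhdsWithin_le_nhds (s := Ioi 0))
  obtain ⟨ε, hsum_pos, hε⟩ := (hsmall.and self_mem_nhdsWithin).exists
  have hX : ∀ᶠ t in atTop, y t ∈ Icc a fun j => X j + ε := by
    filter_upwards [eventually_ge_atTop 0, eventually_all.2 fun j =>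
      eventually_lt_of_limsup_lt (lt_add_of_pos_right (X j) hε) (hbddAbove j)] with t ht hlt
    exact ⟨(hbdd t ht).1, fun j => (hlt j).le⟩
  have hdrop : ∀ᶠ t in atTop, y t i ≤ X i - ε := by
    refine eventually_le_of_lyapunov_on_compact isCompact_Icc (continuous_apply i)
      (Φ := fun e u => -(digraphLaplacian A *ᵥ fun i => g (u i + e i)) i) (by fun_prop) hX hE
      (fun t ht => hy.hasDerivWithinAt_apply i ht) fun u hu hXu => neg_neg_of_pos ?_
    rw [digraphLaplacian_mulVec_apply]
    simp only [Pi.zero_apply, add_zero]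
    exact hsum_pos.trans_le <| Finset.sum_le_sum fun j _ =>
      mul_le_mul_of_nonneg_left (sub_le_sub (hg_mono hXu) (hg_mono (hu.2 j))) (hA i j)
  have hlimsup : X i ≤ X i - ε := limsup_le_of_le (hbddBelow i).isCoboundedUnder_le hdrop
  exact (sub_lt_self (X i) hε).not_ge hlimsup

theorem eventually_lt_of_tendsto_root (hy : IsPerturbedFlow A g y E) (hA : ∀ i j, 0 ≤ A i j)
    (hr : IsSpanningRoot A r) (hg : Continuous g) (hg_mono : Monotone g)
    (hν : ∀ z, g z = g ν → z = ν) (hE : Tendsto E atTop (𝓝 0))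
    (hbdd : ∀ t ∈ Ici 0, y t ∈ Icc a b) (hroot : Tendsto (fun t => y t r) atTop (𝓝 ν)) {c : ℝ}
    (hc : ν < c) (i : ι) : ∀ᶠ t in atTop, y t i < c := by
  have hgX := le_root_of_digraphLaplacian_mulVec_nonpos hA hr
    (hy.digraphLaplacian_mulVec_limsup_nonpos hA hg hg_mono hE hbdd) i
  rw [hroot.limsup_eq] at hgX
  have hX : limsup (fun t => y t i) atTop ≤ ν := by
    by_contra! hlt
    exact hlt.ne' (hν _ (hgX.antisymm (hg_mono hlt.le)))
  exact eventually_lt_of_limsup_lt (hX.trans_lt hc)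
    ⟨b i, eventually_map.2 ((eventually_ge_atTop 0).mono fun t ht => (hbdd t ht).2 i)⟩

theorem tendsto_of_tendsto_root (hy : IsPerturbedFlow A g y E) (hA : ∀ i j, 0 ≤ A i j)
    (hr : IsSpanningRoot A r) (hg : Continuous g) (hg_mono : Monotone g)
    (hν : ∀ z, g z = g ν → z = ν) (hE : Tendsto E atTop (𝓝 0))
    (hbdd : ∀ t ∈ Ici 0, y t ∈ Icc a b) (hroot : Tendsto (fun t => y t r) atTop (𝓝 ν)) (i : ι) :
    Tendsto (fun t => y t i) atTop (𝓝 ν) := by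
  refine tendsto_order.2 ⟨fun c hc => ?_, fun c hc =>
    hy.eventually_lt_of_tendsto_root hA hr hg hg_mono hν hE hbdd hroot hc i⟩
  have hneg := hy.neg.eventually_lt_of_tendsto_root (ν := -ν) hA hr (by fun_prop)
    (fun _ _ h => neg_le_neg (hg_mono (neg_le_neg h)))
    (fun z hz => neg_eq_iff_eq_neg.1 (hν _ (by simpa using hz))) (neg_zero (G := ι → ℝ) ▸ hE.neg)
    (fun t ht => ⟨neg_le_neg (hbdd t ht).2, neg_le_neg (hbdd t ht).1⟩) hroot.neg
    (neg_lt_neg hc) i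
  exact hneg.mono fun t => neg_lt_neg_iff.1

protected theorem tendsto {w : ℝ → ι → ℝ} (hy : IsPerturbedFlow A g y fun t => ∫ s in Ioi t, w s)
    (hA : ∀ i j, 0 ≤ A i j) (hr : IsSpanningRoot A r) (hξ : ∀ i, 0 ≤ ξ i) (hξ1 : ∑ i, ξ i = 1)
    (hξL : ξ ᵥ* digraphLaplacian A = 0) (hg : Continuous g) (hg_mono : Monotone g)
    (hν : ∀ z, g z = g ν → z = ν) (hw : IntegrableOn w (Ioi 0)) (hmean : ξ ⬝ᵥ y 0 = ν) :
    Tendsto y atTop (𝓝 fun _ => ν) := by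
  have hE : Tendsto (fun t => ∫ s in Ioi t, w s) atTop (𝓝 0) := tendsto_integral_Ioi_zero tendsto_id
  obtain ⟨a, b, hbdd⟩ := hy.exists_forall_mem_Icc hA hg_mono hw
  have hξr : 0 < ξ r := hr.leftNull_pos hA hξ hξL (hξ1 ▸ one_ne_zero)
  exact tendsto_pi_nhds.2 <| hy.tendsto_of_tendsto_root hA hr hg hg_mono hν hE hbdd <|
    hy.tendsto_of_leftNull_pos hA hr hξ hξ1 hξL hg hg_mono hν hE hbdd hmean hξr

end IsPerturbedFlow

end PerturbedFlow

section ClosedLoop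

theorem integrableOn_Ioi_of_sq_norm_le_exp {E : Type*} [NormedAddCommGroup E] {e : ℝ → E}
    {a α β : ℝ} (he : AEStronglyMeasurable e (volume.restrict (Ioi a))) (hβ : 0 < β)
    (hbound : ∀ t ∈ Ioi a, ‖e t‖ ^ 2 ≤ α * Real.exp (-β * t)) : IntegrableOn e (Ioi a) := by
  have hdom : IntegrableOn (fun t => √α * Real.exp (-(β / 2) * t)) (Ioi a) :=
    (integrableOn_exp_mul_Ioi (by linarith) a).const_mul _
  refine hdom.mono' he ((ae_restrict_iff' measurableSet_Ioi).2 (.of_forall fun t ht => ?_))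
  calc ‖e t‖ ≤ √(α * Real.exp (-β * t)) := Real.le_sqrt_of_sq_le (hbound t ht)
    _ = √α * Real.exp (-β * t / 2) := by
        rw [Real.sqrt_mul' _ (Real.exp_nonneg _), Real.exp_half]
    _ = √α * Real.exp (-(β / 2) * t) := by ring_nf

theorem eq_of_monotone_of_strictMonoOn_Icc {X Y : Type*} [LinearOrder X] [Preorder Y]
    {g : X → Y} (hg : Monotone g) {a b : X} (hg_strict : StrictMonoOn g (Icc a b)) {u z : X}
    (hu : u ∈ Ioo a b) (hz : g z = g u) : z = u := by
  have huI : u ∈ Icc a b := Ioo_subset_Icc_self hu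
  have hab : a ≤ b := (hu.1.trans hu.2).le
  rcases lt_trichotomy z u with hlt | heq | hgt
  · have hmax : g (max z a) < g u := hg_strict
      ⟨le_max_right z a, max_le (hlt.le.trans hu.2.le) hab⟩ huI (max_lt hlt hu.1)
    exact absurd (hz ▸ (hg (le_max_left z a)).trans_lt hmax) (lt_irrefl _)
  · exact heq
  · have hmin : g u < g (min z b) := hg_strict huI
      ⟨le_min (hu.1.le.trans hgt.le) hab, min_le_right z b⟩ (lt_min hgt hu.2)
    exact absurd (hz ▸ hmin.trans_le (hg (min_le_left z b))) (lt_irrefl _)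

variable {ι : Type*} [Fintype ι] [DecidableEq ι] {A : Matrix ι ι ℝ} {g : ℝ → ℝ} {r : ι}
  {ξ : ι → ℝ}

theorem isPerturbedFlow_sub_integral_Ioi {x e : ℝ → ι → ℝ} (hg : Continuous g)
    (he : IntegrableOn e (Ioi 0)) (hx_cont : ContinuousOn x (Ici 0))
    (hx_eq : ∀ t ∈ Ici 0, x t = x 0 - ∫ s in (0 : ℝ)..t,
      digraphLaplacian A *ᵥ ((fun i => g (x s i)) + e s)) :
    IsPerturbedFlow A g (fun t => x t - ∫ s in Ioi t, digraphLaplacian A *ᵥ e s)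
      fun t => ∫ s in Ioi t, digraphLaplacian A *ᵥ e s := by
  have hfield : Continuous fun u : ι → ℝ => digraphLaplacian A *ᵥ fun i => g (u i) := by fun_prop
  have hflow_cont : ContinuousOn (fun s => digraphLaplacian A *ᵥ fun i => g (x s i)) (Ici 0) :=
    hfield.comp_continuousOn hx_cont
  have hLe : IntegrableOn (fun s => digraphLaplacian A *ᵥ e s) (Ioi 0) :=
    (mulVecLin (digraphLaplacian A)).toContinuousLinearMap.integrable_comp he
  have hsplit : ∀ t ∈ Ici (0 : ℝ), x t - ∫ s in Ioi t, digraphLaplacian A *ᵥ e s =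
      (x 0 - ∫ s in Ioi 0, digraphLaplacian A *ᵥ e s) -
        ∫ s in (0 : ℝ)..t, digraphLaplacian A *ᵥ fun i => g (x s i) := fun t ht => by
    have hflow_int : IntervalIntegrable (fun s => digraphLaplacian A *ᵥ fun i => g (x s i))
        volume 0 t := (hflow_cont.mono Icc_subset_Ici_self).intervalIntegrable_of_Icc ht
    have hLe_int : IntervalIntegrable (fun s => digraphLaplacian A *ᵥ e s) volume 0 t :=
      (intervalIntegrable_iff_integrableOn_Ioc_of_le ht).2 (hLe.mono_set Ioc_subset_Ioi_self)
    rw [hx_eq t ht]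
    simp only [mulVec_add]
    rw [intervalIntegral.integral_add hflow_int hLe_int,
      ← intervalIntegral.integral_Ioi_sub_Ioi hLe ht]
    abel
  intro t ht
  have hderiv := (hasDerivWithinAt_integral_Ici hflow_cont ht).const_sub
    (x 0 - ∫ s in Ioi 0, digraphLaplacian A *ᵥ e s)
  simpa only [Pi.sub_apply, sub_add_cancel] using hderiv.congr hsplit (hsplit t ht)

theorem tendsto_of_scalar_closedLoop (hA : ∀ i j, 0 ≤ A i j) (hr : IsSpanningRoot A r)
    (hξ : ∀ i, 0 ≤ ξ i) (hξ1 : ∑ i, ξ i = 1) (hξL : ξ ᵥ* digraphLaplacian A = 0)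
    (hg : Continuous g) (hg_mono : Monotone g) {x e : ℝ → ι → ℝ}
    (hν : ∀ z, g z = g (ξ ⬝ᵥ x 0) → z = ξ ⬝ᵥ x 0) (he : IntegrableOn e (Ioi 0))
    (hx_cont : ContinuousOn x (Ici 0))
    (hx_eq : ∀ t ∈ Ici 0, x t = x 0 - ∫ s in (0 : ℝ)..t,
      digraphLaplacian A *ᵥ ((fun i => g (x s i)) + e s)) :
    Tendsto x atTop (𝓝 fun _ => ξ ⬝ᵥ x 0) := by
  let Λ := (mulVecLin (digraphLaplacian A)).toContinuousLinearMap
  have hLe : IntegrableOn (fun s => digraphLaplacian A *ᵥ e s) (Ioi 0) := Λ.integrable_comp he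
  have hmean : ξ ⬝ᵥ (x 0 - ∫ s in Ioi 0, digraphLaplacian A *ᵥ e s) = ξ ⬝ᵥ x 0 := by
    rw [show ∫ s in Ioi 0, digraphLaplacian A *ᵥ e s = digraphLaplacian A *ᵥ ∫ s in Ioi 0, e s from
      Λ.integral_comp_comm he, dotProduct_sub, dotProduct_digraphLaplacian_mulVec_eq_zero hξL,
      sub_zero]
  have hy := (isPerturbedFlow_sub_integral_Ioi hg he hx_cont hx_eq).tendsto hA hr hξ hξ1 hξL hg
    hg_mono hν hLe hmean
  simpa using hy.add (tendsto_integral_Ioi_zero tendsto_id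
    (f := fun s => digraphLaplacian A *ᵥ e s) (μ := volume))

theorem eval_intervalIntegral_euclideanSpace {ι κ : Type*} [Fintype ι] [Fintype κ]
    {f : ι → ℝ → EuclideanSpace ℝ κ} {a b : ℝ}
    (hf : ∀ i, IntervalIntegrable (f i) volume a b) (l : κ) :
    (fun i => (∫ s in a..b, f i s) l) = ∫ s in a..b, fun i => f i s l := by
  have hfl : ∀ i, IntervalIntegrable (fun s => f i s l) volume a b := fun i =>
    ⟨(EuclideanSpace.proj (𝕜 := ℝ) l).integrable_comp (hf i).1,
      (EuclideanSpace.proj (𝕜 := ℝ) l).integrable_comp (hf i).2⟩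
  have hpi : IntervalIntegrable (fun s i => f i s l) volume a b :=
    ⟨Integrable.of_eval fun i => (hfl i).1, Integrable.of_eval fun i => (hfl i).2⟩
  ext i
  exact ((EuclideanSpace.proj (𝕜 := ℝ) l).intervalIntegral_comp_comm (hf i)).symm.trans
    ((ContinuousLinearMap.proj (R := ℝ) i).intervalIntegral_comp_comm hpi)

theorem closedLoop_component_eq {ι κ : Type*} [Fintype ι] [Fintype κ] {L : Matrix ι ι ℝ}
    {g : ℝ → ℝ} (hg : Continuous g) {gv : EuclideanSpace ℝ κ → EuclideanSpace ℝ κ}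
    (hgv : ∀ v l, gv v l = g (v l)) {e : ι → ℝ → EuclideanSpace ℝ κ}
    (he : ∀ i, IntegrableOn (e i) (Ioi 0)) {x : ℝ → ι → EuclideanSpace ℝ κ}
    (hx_cont : ∀ i, ContinuousOn (fun t => x t i) (Ici 0))
    (hx_eq : ∀ i, ∀ t ∈ Ici 0, x t i = x 0 i - ∫ s in (0 : ℝ)..t,
      ∑ j, L i j • (gv (x s j) + e j s)) (l : κ) {t : ℝ} (ht : t ∈ Ici 0) :
    (fun i => x t i l) = (fun i => x 0 i l) - ∫ s in (0 : ℝ)..t,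
      L *ᵥ ((fun i => g (x s i l)) + fun i => e i s l) := by
  have hgv_cont : Continuous gv := by
    refine (PiLp.continuous_toLp 2 _).comp (?_ : Continuous fun v l => gv v l)
    simp only [hgv]
    fun_prop
  have hint : ∀ j, IntervalIntegrable (fun s => gv (x s j) + e j s) volume 0 t := fun j =>
    IntervalIntegrable.add
      (((hgv_cont.comp_continuousOn (hx_cont j)).mono
        Icc_subset_Ici_self).intervalIntegrable_of_Icc ht)
      ((intervalIntegrable_iff_integrableOn_Ioc_of_le ht).2 ((he j).mono_set Ioc_subset_Ioi_self))
  have hsum : ∀ i, IntervalIntegrable (fun s => ∑ j, L i j • (gv (x s j) + e j s)) volume 0 t :=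
    fun i => by
      simpa only [Finset.sum_fn, Pi.smul_def] using
        IntervalIntegrable.sum Finset.univ fun j _ => (hint j).smul (L i j)
  have hfield : ∀ s, (fun i => (∑ j, L i j • (gv (x s j) + e j s)) l) =
      L *ᵥ ((fun i => g (x s i l)) + fun i => e i s l) := fun s => by
    ext i
    simp [mulVec, dotProduct, mul_add, hgv]
  simp only [← hfield]
  rw [← eval_intervalIntegral_euclideanSpace hsum]
  ext i
  rw [hx_eq i t ht]
  rfl

theorem event_triggered_consensus_spanning_tree_general {κ : Type*} [Fintype κ]
    (hA : ∀ i j, 0 ≤ A i j) (hr : IsSpanningRoot A r)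
    (hξ : ∀ i, 0 ≤ ξ i) (hξ1 : ∑ i, ξ i = 1) (hξL : ξ ᵥ* digraphLaplacian A = 0)
    (hg : Continuous g) (hg_mono : Monotone g) {gv : EuclideanSpace ℝ κ → EuclideanSpace ℝ κ}
    (hgv : ∀ v l, gv v l = g (v l)) {e : ι → ℝ → EuclideanSpace ℝ κ}
    (he : ∀ i, IntegrableOn (e i) (Ioi 0)) {x : ℝ → ι → EuclideanSpace ℝ κ}
    (hx_cont : ∀ i, ContinuousOn (fun t => x t i) (Ici 0))
    (hx_eq : ∀ i, ∀ t ∈ Ici 0, x t i = x 0 i - ∫ s in (0 : ℝ)..t,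
      ∑ j, digraphLaplacian A i j • (gv (x s j) + e j s))
    {ν : EuclideanSpace ℝ κ} (hν : ν = ∑ i, ξ i • x 0 i)
    (hνg : ∀ l z, g z = g (ν l) → z = ν l) (i : ι) :
    Tendsto (fun t => x t i) atTop (𝓝 ν) := by
  have hcomponent : ∀ l, Tendsto (fun t => x t i l) atTop (𝓝 (ν l)) := fun l => by
    have hνl : ν l = ξ ⬝ᵥ fun i => x 0 i l := by simp [hν, dotProduct]
    have hcont : ContinuousOn (fun t i => x t i l) (Ici 0) := continuousOn_pi.2 fun i =>
      (EuclideanSpace.proj (𝕜 := ℝ) l).continuous.comp_continuousOn (hx_cont i)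
    rw [hνl]
    exact tendsto_pi_nhds.1 (tendsto_of_scalar_closedLoop hA hr hξ hξ1 hξL hg hg_mono
      (hνl ▸ hνg l) (Integrable.of_eval fun j =>
        (EuclideanSpace.proj (𝕜 := ℝ) l).integrable_comp (he j)) hcont
      fun t => closedLoop_component_eq hg hgv he hx_cont hx_eq l) i
  exact ((PiLp.continuous_toLp 2 _).tendsto _).comp (tendsto_pi_nhds.2 hcomponent)

end ClosedLoop

/-- Theorem 2, consensus: For a weighted digraph having a
directed spanning tree, with Laplacian `L` and nonnegative left null vector
`ξ` of unit sum, a nonlinear output function `g` satisfying all parts of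
Assumption 1 (including the lower Lipschitz bound `|g(x) − g(y)| ≥ ϱ|x − y|`
on `[−h, h]`, extended componentwise to `ℝᵖ`), and measurement errors `e_i`
with `‖e_i(t)‖² ≤ α_i e^{−β_i t}`, any continuous solution of the closed loop
`x_i(t) = x_i(0) − ∫_0^t Σ_j L_{ij}(g(x_j(s)) + e_j(s)) ds` converges to
`ν = Σ_i ξ_i x_i(0)`, provided `|ν_l| < h` for every component `l`. -/
theorem event_triggered_consensus_spanning_tree {n p : ℕ}
    (A : Matrix (Fin n) (Fin n) ℝ)
    (hA_nonneg : ∀ i j, 0 ≤ A i j)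
    (hA_diag : ∀ i, A i i = 0)
    (r : Fin n)
    (htree : ∀ i, Relation.ReflTransGen (fun u v => 0 < A v u) r i)
    (L : Matrix (Fin n) (Fin n) ℝ)
    (hL : ∀ i j, L i j = (if i = j then ∑ k, A i k else 0) - A i j)
    (ξ : Fin n → ℝ) (hξnonneg : ∀ i, 0 ≤ ξ i) (hξsum : ∑ i, ξ i = 1)
    (hξL : ∀ j, ∑ i, ξ i * L i j = 0)
    (h : ℝ) (hh : 0 < h)
    (g : ℝ → ℝ)
    (hg_cont : Continuous g)
    (hg_mono : Monotone g)
    (hg_strict : StrictMonoOn g (Set.Icc (-h) h))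
    (hg_zero : ∀ x, g x = 0 ↔ x = 0)
    (hg_lip : LocallyLipschitz g)
    (ϱ : ℝ) (hϱ : 0 < ϱ)
    (hg_lb : ∀ x ∈ Set.Icc (-h) h, ∀ y ∈ Set.Icc (-h) h,
      ϱ * |x - y| ≤ |g x - g y|)
    (gv : EuclideanSpace ℝ (Fin p) → EuclideanSpace ℝ (Fin p))
    (hgv : ∀ v l, gv v l = g (v l))
    (α β : Fin n → ℝ) (hα : ∀ i, 0 < α i) (hβ : ∀ i, 0 < β i)
    (e : Fin n → ℝ → EuclideanSpace ℝ (Fin p))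
    (he_meas : ∀ i, Measurable (e i))
    (he_bound : ∀ i, ∀ t : ℝ, 0 ≤ t → ‖e i t‖ ^ 2 ≤ α i * Real.exp (-β i * t))
    (x : ℝ → Fin n → EuclideanSpace ℝ (Fin p))
    (hx_cont : ∀ i, ContinuousOn (fun t => x t i) (Set.Ici (0 : ℝ)))
    (hx_eq : ∀ i, ∀ t : ℝ, 0 ≤ t →
      x t i = x 0 i - ∫ s in (0 : ℝ)..t, ∑ j, L i j • (gv (x s j) + e j s))
    (ν : EuclideanSpace ℝ (Fin p)) (hν : ν = ∑ i, ξ i • x 0 i)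
    (hν_lt : ∀ l, |ν l| < h) :
    ∀ i, Tendsto (fun t => x t i) atTop (nhds ν) := by
  obtain rfl : L = digraphLaplacian A := Matrix.ext hL
  have he_int : ∀ i, IntegrableOn (e i) (Ioi 0) := fun i =>
    integrableOn_Ioi_of_sq_norm_le_exp (he_meas i).aestronglyMeasurable (hβ i)
      fun t ht => he_bound i t (le_of_lt ht)
  have hν_unique : ∀ l z, g z = g (ν l) → z = ν l := fun l _ =>
    eq_of_monotone_of_strictMonoOn_Icc hg_mono hg_strict (abs_lt.1 (hν_lt l))
  exact event_triggered_consensus_spanning_tree_general hA_nonneg htree hξnonneg hξsum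
    (funext hξL) hg_cont hg_mono hgv he_int hx_cont hx_eq hν hν_unique
end
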